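/- arXiv:1508.03182 — 2 statements merged into one kernel-verified Lean document; each statement's English description precedes it below -/
import Mathlib

section
/- Let (Ω, 𝒜, μ) be a measure space, p ∈ [1,∞), T a positive C₀-semigroup on L_p(μ) with generator A, and V : Ω → [0,∞] locally measurable (not assumed T-admissible). Then (T_V)_{−V}(t) = s-lim_{ε→0+} T_{εV}(t) for every t > 0. -/
open MeasureTheory Filter Topology ENNReal

noncomputable section

namespace Absorption

variable {E : Type*} [NormedAddCommGroup E] [NormedSpace ℝ E]

/-- A one-parameter semigroup of bounded operators (for nonnegative times). -/
def IsSemigroup (T : ℝ → E →L[ℝ] E) : Prop :=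
  T 0 = ContinuousLinearMap.id ℝ E ∧
    ∀ s t : ℝ, 0 ≤ s → 0 ≤ t → T (s + t) = (T s).comp (T t)

/-- A `C₀`-semigroup: a one-parameter semigroup which is strongly continuous on `[0, ∞)`. -/
def IsC0Semigroup (T : ℝ → E →L[ℝ] E) : Prop :=
  IsSemigroup T ∧ ∀ f : E, ContinuousOn (fun t => T t f) (Set.Ici (0 : ℝ))

/-- `(f, g)` belongs to the graph of the generator of the semigroup `T`. -/
def InGenerator (T : ℝ → E →L[ℝ] E) (f g : E) : Prop :=
  Tendsto (fun t : ℝ => t⁻¹ • (T t f - f)) (𝓝[>] (0 : ℝ)) (𝓝 g)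

variable {Ω : Type*} [MeasurableSpace Ω]

/-- A function into a measurable space is *locally measurable* (w.r.t. `μ`) if on every set of
finite measure it coincides a.e. with a measurable function. -/
def LocallyMeasurable {α : Type*} [MeasurableSpace α] (μ : Measure Ω) (V : Ω → α) : Prop :=
  ∀ B : Set Ω, MeasurableSet B → μ B < ∞ →
    ∃ g : Ω → α, Measurable g ∧ ∀ᵐ ω ∂(μ.restrict B), V ω = g ω

/-- A set is a local `μ`-null set if its intersection with every measurable set of finite
measure is null. -/
def IsLocalNullSet (μ : Measure Ω) (N : Set Ω) : Prop :=
  ∀ B : Set Ω, MeasurableSet B → μ B < ∞ → μ (N ∩ B) = 0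

/-- Positivity of a family of operators on `L_p` (for positive times). -/
def IsPositiveSG {p : ℝ≥0∞} {μ : Measure Ω} [Fact (1 ≤ p)]
    (T : ℝ → Lp ℝ p μ →L[ℝ] Lp ℝ p μ) : Prop :=
  ∀ t : ℝ, 0 ≤ t → ∀ f : Lp ℝ p μ, 0 ≤ f → 0 ≤ T t f

/-- A band projection on the Banach lattice `L_p(μ)`: an idempotent operator `P`
with `0 ≤ P f ≤ f` for all `f ≥ 0`. -/
def IsBandProjection {p : ℝ≥0∞} {μ : Measure Ω} [Fact (1 ≤ p)]
    (P : Lp ℝ p μ →L[ℝ] Lp ℝ p μ) : Prop :=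
  P.comp P = P ∧ ∀ f : Lp ℝ p μ, 0 ≤ f → 0 ≤ P f ∧ P f ≤ f

/-- `S = (e^{t(A−W)})_{t ≥ 0}`: `S` is the `C₀`-semigroup whose generator is `A - W`,
where `A` is the generator of `T` and the bounded function `W` acts by multiplication. -/
def IsPerturbedSG (μ : Measure Ω) (p : ℝ≥0∞) [Fact (1 ≤ p)]
    (T S : ℝ → Lp ℝ p μ →L[ℝ] Lp ℝ p μ) (W : Ω → ℝ) : Prop :=
  IsC0Semigroup S ∧
    ∀ f g : Lp ℝ p μ, InGenerator S f g ↔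
      ∃ g₀ : Lp ℝ p μ, InGenerator T f g₀ ∧
        ⇑g =ᵐ[μ] fun ω => g₀ ω - W ω * f ω

/-- Same as `IsPerturbedSG`, for semigroups acting on a subspace `F` of `L_p(μ)`. -/
def IsPerturbedSGSub (μ : Measure Ω) (p : ℝ≥0∞) [Fact (1 ≤ p)] (F : Submodule ℝ (Lp ℝ p μ))
    (T S : ℝ → F →L[ℝ] F) (W : Ω → ℝ) : Prop :=
  IsC0Semigroup S ∧
    ∀ f g : F, InGenerator S f g ↔
      ∃ g₀ : F, InGenerator T f g₀ ∧
        ⇑(g : Lp ℝ p μ) =ᵐ[μ] fun ω => (g₀ : Lp ℝ p μ) ω - W ω * (f : Lp ℝ p μ) ω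

/-- The truncation `V ∧ n` of `V : Ω → [0,∞]`, as a real-valued function. -/
def trunc (V : Ω → ℝ≥0∞) (n : ℕ) : Ω → ℝ := fun ω => (min (V ω) (n : ℝ≥0∞)).toReal

/-- The scalar multiple `ε V` of an absorption rate `V : Ω → [0,∞]`. -/
def smulRate (ε : ℝ) (V : Ω → ℝ≥0∞) : Ω → ℝ≥0∞ := fun ω => ENNReal.ofReal ε * V ω

/-- The absorption rate `V - V ∧ n` (with value `∞` wherever `V = ∞`). -/
def resid (V : Ω → ℝ≥0∞) (n : ℕ) : Ω → ℝ≥0∞ := fun ω => V ω - min (V ω) (n : ℝ≥0∞)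

/-- `TV` is the absorption semigroup `T_V` associated with the rate `V : Ω → [0,∞]`, i.e.
the strong limit `T_V(t) = s-lim_{n→∞} e^{t(A - V∧n)}` (for `t ≥ 0`). -/
def IsAbsorptionSG (μ : Measure Ω) (p : ℝ≥0∞) [Fact (1 ≤ p)]
    (T : ℝ → Lp ℝ p μ →L[ℝ] Lp ℝ p μ) (V : Ω → ℝ≥0∞)
    (TV : ℝ → Lp ℝ p μ →L[ℝ] Lp ℝ p μ) : Prop :=
  ∃ S : ℕ → ℝ → Lp ℝ p μ →L[ℝ] Lp ℝ p μ,
    (∀ n, IsPerturbedSG μ p T (S n) (trunc V n)) ∧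
    ∀ t : ℝ, 0 ≤ t → ∀ f, Tendsto (fun n => S n t f) atTop (𝓝 (TV t f))

/-- `V : Ω → [0,∞]` is `T`-admissible: `V` is locally measurable, the strong limits
`T_V(t) = s-lim_{n→∞} e^{t(A - V∧n)}` exist, and `T_V` is a `C₀`-semigroup. -/
def Admissible (μ : Measure Ω) (p : ℝ≥0∞) [Fact (1 ≤ p)]
    (T : ℝ → Lp ℝ p μ →L[ℝ] Lp ℝ p μ) (V : Ω → ℝ≥0∞) : Prop :=
  LocallyMeasurable μ V ∧
  ∃ TV, IsAbsorptionSG μ p T V TV ∧ IsC0Semigroup TV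

/-- The truncation `(V ∧ n) ∨ (−n)` of an extended-real-valued rate, as a real function. -/
def truncE (V : Ω → EReal) (n : ℕ) : Ω → ℝ :=
  fun ω => (max (min (V ω) (n : EReal)) (-(n : EReal))).toReal

/-- `TV` is the absorption semigroup `T_V` of an extended-real-valued rate `V`:
`T_V(t) = s-lim_{n→∞} e^{t(A - (V∧n)∨(−n))}` (for `t ≥ 0`). -/
def IsAbsorptionSGE (μ : Measure Ω) (p : ℝ≥0∞) [Fact (1 ≤ p)]
    (T : ℝ → Lp ℝ p μ →L[ℝ] Lp ℝ p μ) (V : Ω → EReal)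
    (TV : ℝ → Lp ℝ p μ →L[ℝ] Lp ℝ p μ) : Prop :=
  ∃ S : ℕ → ℝ → Lp ℝ p μ →L[ℝ] Lp ℝ p μ,
    (∀ n, IsPerturbedSG μ p T (S n) (truncE V n)) ∧
    ∀ t : ℝ, 0 ≤ t → ∀ f, Tendsto (fun n => S n t f) atTop (𝓝 (TV t f))

/-- `T`-admissibility for an extended-real-valued absorption rate `V`. -/
def AdmissibleE (μ : Measure Ω) (p : ℝ≥0∞) [Fact (1 ≤ p)]
    (T : ℝ → Lp ℝ p μ →L[ℝ] Lp ℝ p μ) (V : Ω → EReal) : Prop :=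
  LocallyMeasurable μ V ∧
  ∃ TV, IsAbsorptionSGE μ p T V TV ∧ IsC0Semigroup TV

end Absorption

open Absorption

namespace AbsPf
open Set

section Abs
variable {E : Type*} [NormedAddCommGroup E] [NormedSpace ℝ E]

/-- the family extended to the whole line by its value at zero -/
def ex (S : ℝ → E →L[ℝ] E) (t : ℝ) : E →L[ℝ] E := S (max t 0)

lemma ex_of_nonneg (S : ℝ → E →L[ℝ] E) {t : ℝ} (ht : 0 ≤ t) : ex S t = S t := by
  simp [ex, max_eq_left ht]

lemma ex_cont {S : ℝ → E →L[ℝ] E} (hS : IsC0Semigroup S) (f : E) :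
    Continuous fun t => ex S t f :=
  (hS.2 f).comp_continuous (f := fun t : ℝ => max t 0) (by fun_prop)
    (fun t => mem_Ici.2 (le_max_right _ _))

lemma ex_bdd [CompleteSpace E] {S : ℝ → E →L[ℝ] E} (hS : IsC0Semigroup S) (τ : ℝ) :
    ∃ M, 0 ≤ M ∧ ∀ t, t ≤ τ → ‖ex S t‖ ≤ M := by
  have h := banach_steinhaus (g := fun t : Icc (0:ℝ) (max τ 0) => ex S t) (fun x => by
    obtain ⟨C, hC⟩ := (isCompact_Icc (a := (0:ℝ)) (b := max τ 0)).exists_bound_of_continuousOn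
      (ex_cont hS x).continuousOn
    exact ⟨C, fun i => hC i i.2⟩)
  obtain ⟨C, hC⟩ := h
  refine ⟨C, (norm_nonneg _).trans (hC ⟨0, by simp⟩), fun t ht => ?_⟩
  have := hC ⟨max t 0, by simp, max_le_max_right 0 ht⟩
  simpa [ex] using this

lemma ex_joint [CompleteSpace E] {S : ℝ → E →L[ℝ] E} (hS : IsC0Semigroup S) :
    Continuous fun q : ℝ × E => ex S q.1 q.2 := by
  rw [continuous_iff_continuousAt]
  rintro ⟨t₀, x₀⟩
  obtain ⟨M, hM, hb⟩ := ex_bdd hS (t₀ + 1)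
  have h1 : Tendsto (fun q : ℝ × E => ex S q.1 (q.2 - x₀)) (𝓝 (t₀, x₀)) (𝓝 0) := by
    have h2 : Tendsto (fun q : ℝ × E => M * ‖q.2 - x₀‖) (𝓝 (t₀, x₀)) (𝓝 0) := by
      have : Continuous (fun q : ℝ × E => M * ‖q.2 - x₀‖) := by fun_prop
      simpa using this.tendsto (t₀, x₀)
    refine squeeze_zero_norm' ?_ h2
    have : ∀ᶠ q : ℝ × E in 𝓝 (t₀, x₀), q.1 < t₀ + 1 :=
      (continuous_fst.tendsto (t₀, x₀)).eventually_lt_const (by simp)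
    filter_upwards [this] with q hq
    exact (ContinuousLinearMap.le_opNorm _ _).trans
      (mul_le_mul_of_nonneg_right (hb _ hq.le) (norm_nonneg _))
  have h3 : Tendsto (fun q : ℝ × E => ex S q.1 x₀) (𝓝 (t₀, x₀)) (𝓝 (ex S t₀ x₀)) :=
    ((ex_cont hS x₀).comp continuous_fst).tendsto (t₀, x₀)
  have := h1.add h3
  simp only [zero_add, ← map_add, sub_add_cancel] at this
  exact this

/-- convolution of a semigroup and a function -/
def cv (S : ℝ → E →L[ℝ] E) (x : ℝ → E) (t : ℝ) : E := ∫ s in (0:ℝ)..t, ex S (t - s) (x s)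

lemma cv_integrand [CompleteSpace E] {S : ℝ → E →L[ℝ] E} (hS : IsC0Semigroup S) {x : ℝ → E}
    (hx : Continuous x) (t : ℝ) : Continuous fun s => ex S (t - s) (x s) :=
  (ex_joint hS).comp (f := fun s => (t - s, x s)) (by fun_prop)

lemma cv_cont [CompleteSpace E] {S : ℝ → E →L[ℝ] E} (hS : IsC0Semigroup S) {x : ℝ → E}
    (hx : Continuous x) : Continuous (cv S x) := by
  refine intervalIntegral.continuous_parametric_intervalIntegral_of_continuous
    (f := fun t s => ex S (t - s) (x s)) ?_ continuous_id
  exact (ex_joint hS).comp (f := fun q : ℝ × ℝ => (q.1 - q.2, x q.2)) (by fun_prop)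

lemma cv_sub [CompleteSpace E] {S : ℝ → E →L[ℝ] E} (hS : IsC0Semigroup S) {x y : ℝ → E}
    (hx : Continuous x) (hy : Continuous y) (t : ℝ) :
    cv S x t - cv S y t = cv S (fun s => x s - y s) t := by
  unfold cv
  rw [← intervalIntegral.integral_sub ((cv_integrand hS hx t).intervalIntegrable _ _)
    ((cv_integrand hS hy t).intervalIntegrable _ _)]
  simp

/-- `Z` is generated by (generator of `S`) + `B` (the inclusion that we need). -/
def Pert (S : ℝ → E →L[ℝ] E) (B : E →L[ℝ] E) (Z : ℝ → E →L[ℝ] E) : Prop :=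
  IsC0Semigroup S ∧ IsC0Semigroup Z ∧ ∀ f g, InGenerator Z f g → InGenerator S f (g - B f)

lemma gen_dense [CompleteSpace E] {Z : ℝ → E →L[ℝ] E} (hZ : IsC0Semigroup Z) (f : E) :
    ∃ y : ℝ → E, Tendsto y (𝓝[>] 0) (𝓝 f) ∧ ∀ h, 0 < h → ∃ g, InGenerator Z (y h) g := by
  set Φ : ℝ → E := fun t => ∫ s in (0:ℝ)..t, ex Z s f with hΦ
  have hc := ex_cont hZ f
  have hd : ∀ t, HasDerivAt Φ (ex Z t f) t := fun t => hc.integral_hasStrictDerivAt 0 t |>.hasDerivAt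
  have hΦ0 : Φ 0 = 0 := by simp [hΦ]
  refine ⟨fun h => h⁻¹ • Φ h, ?_, ?_⟩
  · have := (hd 0).tendsto_slope_zero_right
    simpa [hΦ0, ex, hZ.1.1] using this
  · intro h hh
    have key : InGenerator Z (Φ h) (ex Z h f - ex Z 0 f) := by
      have h1 : HasDerivAt (fun r => Φ (h + r) - Φ r) (ex Z h f - ex Z 0 f) 0 := by
        refine HasDerivAt.sub ?_ (hd 0)
        have := (hd (h + 0)).comp_const_add h 0
        simpa using this
      have := h1.tendsto_slope_zero_right
      refine this.congr' ?_
      filter_upwards [self_mem_nhdsWithin] with r hr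
      have hr0 : (0:ℝ) ≤ r := le_of_lt hr
      have e1 : Z r (Φ h) = Φ (h + r) - Φ r := by
        have i1 : Z r (Φ h) = ∫ s in (0:ℝ)..h, Z r (ex Z s f) := by
          rw [hΦ]
          exact ((Z r).intervalIntegral_comp_comm (hc.intervalIntegrable _ _)).symm
        rw [i1]
        have i2 : ∫ s in (0:ℝ)..h, Z r (ex Z s f) = ∫ s in (0:ℝ)..h, ex Z (s + r) f := by
          refine intervalIntegral.integral_congr fun s hs => ?_
          rw [uIcc_of_le hh.le] at hs
          rw [ex_of_nonneg _ hs.1, ex_of_nonneg _ (add_nonneg hs.1 hr0), add_comm,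
            hZ.1.2 r s hr0 hs.1]
          rfl
        rw [i2, intervalIntegral.integral_comp_add_right (fun s => ex Z s f) r, hΦ]
        simp only [zero_add]
        rw [eq_sub_iff_add_eq, add_comm]
        exact intervalIntegral.integral_add_adjacent_intervals (hc.intervalIntegrable _ _)
          (hc.intervalIntegrable _ _)
      rw [e1]
      simp [hΦ0]
    refine ⟨h⁻¹ • (ex Z h f - ex Z 0 f), ?_⟩
    have := key.const_smul h⁻¹
    refine this.congr fun r => ?_
    rw [smul_comm, map_smul, smul_sub]

lemma gen_inv {Z : ℝ → E →L[ℝ] E} (hZ : IsC0Semigroup Z) {f g : E} (h : InGenerator Z f g)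
    {s : ℝ} (hs : 0 ≤ s) : InGenerator Z (Z s f) (Z s g) := by
  have := ((Z s).continuous.tendsto g).comp h
  refine this.congr' ?_
  filter_upwards [self_mem_nhdsWithin] with r hr
  have hr0 : (0:ℝ) ≤ r := le_of_lt hr
  have e : Z r (Z s f) = Z s (Z r f) := by
    have h1 := congrArg (fun L => L f) (hZ.1.2 r s hr0 hs)
    have h2 := congrArg (fun L => L f) (hZ.1.2 s r hs hr0)
    simp only [ContinuousLinearMap.comp_apply] at h1 h2
    rw [← h1, ← h2, add_comm]
  simp [e]

lemma duhamel_dom [CompleteSpace E] {S Z : ℝ → E →L[ℝ] E} {B : E →L[ℝ] E} (h : Pert S B Z)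
    {f g : E} (hf : InGenerator Z f g) {t : ℝ} (ht : 0 ≤ t) :
    ex Z t f = ex S t f + cv S (fun s => B (ex Z s f)) t := by
  obtain ⟨hS, hZ, hg⟩ := h
  have hcZ := ex_cont hZ f
  have hcont : Continuous fun s => ex S (t - s) (ex Z s f) := cv_integrand hS hcZ t
  have hcont' : Continuous fun s => ex S (t - s) (B (ex Z s f)) :=
    cv_integrand hS (B.continuous.comp hcZ) t
  have key := intervalIntegral.integral_eq_sub_of_hasDeriv_right_of_le ht hcont.continuousOn
    (f' := fun s => ex S (t - s) (B (ex Z s f))) ?_ (hcont'.intervalIntegrable _ _)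
  · have e0 : ex S (t - t) (ex Z t f) = ex Z t f := by simp [ex, hS.1.1]
    have e1 : ex S (t - 0) (ex Z 0 f) = ex S t f := by simp [ex, hZ.1.1]
    rw [e0, e1] at key
    unfold cv
    rw [key]
    abel
  · intro s hs
    rw [hasDerivWithinAt_iff_tendsto_slope' (by simp)]
    have hs0 : 0 ≤ s := hs.1.le
    have d1 : InGenerator Z (Z s f) (Z s g) := gen_inv hZ hf hs0
    have d2 := hg _ _ d1
    have d3 : Tendsto (fun r : ℝ => r⁻¹ • (Z r (Z s f) - Z s f) - r⁻¹ • (S r (Z s f) - Z s f))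
        (𝓝[>] 0) (𝓝 (B (Z s f))) := by
      have := Tendsto.sub d1 d2
      simpa using this
    have d4 : Tendsto (fun y : ℝ => y - s) (𝓝[>] s) (𝓝[>] 0) := by
      refine tendsto_nhdsWithin_iff.2 ⟨?_, ?_⟩
      · have : Continuous fun y : ℝ => y - s := by fun_prop
        have := this.tendsto s
        simp only [sub_self] at this
        exact this.mono_left nhdsWithin_le_nhds
      · filter_upwards [self_mem_nhdsWithin] with y hy
        simpa using hy
    have d5 : Tendsto (fun y : ℝ => t - y) (𝓝[>] s) (𝓝 (t - s)) := by
      have : Continuous fun y : ℝ => t - y := by fun_prop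
      exact (this.tendsto s).mono_left nhdsWithin_le_nhds
    have d6 := ((ex_joint hS).tendsto (t - s, B (Z s f))).comp (d5.prodMk_nhds (d3.comp d4))
    rw [ex_of_nonneg Z hs0]
    refine d6.congr' ?_
    filter_upwards [Ioo_mem_nhdsGT hs.2] with y hy
    have hy1 : 0 ≤ y - s := (sub_pos.2 hy.1).le
    have hy2 : 0 ≤ t - y := (sub_pos.2 hy.2).le
    have a1 : Z (y - s) (Z s f) = ex Z y f := by
      have := congrArg (fun L => L f) (hZ.1.2 (y - s) s hy1 hs0)
      simp only [ContinuousLinearMap.comp_apply, sub_add_cancel] at this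
      rw [ex_of_nonneg Z (hs0.trans hy.1.le), this]
    have a2 : ex S (t - y) (S (y - s) (Z s f)) = ex S (t - s) (Z s f) := by
      have := congrArg (fun L => L (Z s f)) (hS.1.2 (t - y) (y - s) hy2 hy1)
      simp only [ContinuousLinearMap.comp_apply, sub_add_sub_cancel] at this
      rw [ex_of_nonneg S hy2, ex_of_nonneg S (sub_pos.2 hs.2).le, this]
    simp only [Function.comp_apply, slope, vsub_eq_sub]
    rw [← smul_sub, sub_sub_sub_cancel_right, map_smul, map_sub, a2, a1, ex_of_nonneg Z hs0]

lemma duhamel [CompleteSpace E] {S Z : ℝ → E →L[ℝ] E} {B : E →L[ℝ] E} (h : Pert S B Z)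
    (f : E) {t : ℝ} (ht : 0 ≤ t) :
    ex Z t f = ex S t f + cv S (fun s => B (ex Z s f)) t := by
  obtain ⟨y, hy, hyg⟩ := gen_dense h.2.1 f
  obtain ⟨M, hM, hMb⟩ := ex_bdd h.1 t
  obtain ⟨K, hK, hKb⟩ := ex_bdd h.2.1 t
  have l1 : Tendsto (fun r => ex Z t (y r)) (𝓝[>] 0) (𝓝 (ex Z t f)) :=
    ((ex Z t).continuous.tendsto f).comp hy
  have l2 : Tendsto (fun r => ex S t (y r)) (𝓝[>] 0) (𝓝 (ex S t f)) :=
    ((ex S t).continuous.tendsto f).comp hy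
  have l3 : Tendsto (fun r => cv S (fun s => B (ex Z s (y r))) t) (𝓝[>] 0)
      (𝓝 (cv S (fun s => B (ex Z s f)) t)) := by
    unfold cv
    refine intervalIntegral.tendsto_integral_filter_of_dominated_convergence
      (fun _ => M * (‖B‖ * (K * (‖f‖ + 1)))) ?_ ?_ (by simp) ?_
    · exact Eventually.of_forall fun r =>
        (cv_integrand h.1 (B.continuous.comp (ex_cont h.2.1 (y r))) t).aestronglyMeasurable
    · have : ∀ᶠ r in 𝓝[>] (0:ℝ), ‖y r‖ < ‖f‖ + 1 := hy.norm.eventually_lt_const (by simp)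
      filter_upwards [this] with r hr
      refine Eventually.of_forall fun s hs => ?_
      rw [uIoc_of_le ht] at hs
      calc ‖ex S (t - s) (B (ex Z s (y r)))‖
          ≤ ‖ex S (t - s)‖ * (‖B‖ * (‖ex Z s‖ * ‖y r‖)) :=
            (ContinuousLinearMap.le_opNorm _ _).trans (mul_le_mul_of_nonneg_left
              ((ContinuousLinearMap.le_opNorm _ _).trans (mul_le_mul_of_nonneg_left
                (ContinuousLinearMap.le_opNorm _ _) (norm_nonneg _))) (norm_nonneg _))
        _ ≤ _ := by
            gcongr
            · exact hMb _ (by linarith [hs.1])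
            · exact hKb _ hs.2
    · refine Eventually.of_forall fun s hs => ?_
      have : Continuous fun x : E => ex S (t - s) (B (ex Z s x)) := by fun_prop
      exact (this.tendsto f).comp hy
  refine tendsto_nhds_unique l1 ((l2.add l3).congr' ?_)
  filter_upwards [self_mem_nhdsWithin] with r hr
  obtain ⟨g, hg⟩ := hyg r hr
  exact (duhamel_dom h hg ht).symm

/-- Picard iterates -/
def pic (S : ℝ → E →L[ℝ] E) (B : E →L[ℝ] E) (f : E) : ℕ → ℝ → E
  | 0 => fun _ => 0
  | N + 1 => fun t => ex S t f + cv S (fun s => B (pic S B f N s)) t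

lemma pic_cont [CompleteSpace E] {S : ℝ → E →L[ℝ] E} (hS : IsC0Semigroup S) (B : E →L[ℝ] E)
    (f : E) : ∀ N, Continuous (pic S B f N)
  | 0 => continuous_const
  | N + 1 => (ex_cont hS f).add (cv_cont hS (B.continuous.comp (pic_cont hS B f N)))

lemma err_bound {S : ℝ → E →L[ℝ] E} (B : E →L[ℝ] E)
    {M K τ : ℝ} (hM0 : 0 ≤ M) (hM : ∀ t, t ≤ τ → ‖ex S t‖ ≤ M)
    (x : ℕ → ℝ → E)
    (hx0 : ∀ t, 0 ≤ t → t ≤ τ → ‖x 0 t‖ ≤ K)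
    (hxs : ∀ N t, 0 ≤ t → t ≤ τ → x (N + 1) t = cv S (fun s => B (x N s)) t) :
    ∀ N t, 0 ≤ t → t ≤ τ → ‖x N t‖ ≤ K * ((M * ‖B‖ * t) ^ N / N.factorial) := by
  intro N
  induction N with
  | zero => intro t h0 h1; simpa using hx0 t h0 h1
  | succ N ih =>
    intro t h0 h1
    rw [hxs N t h0 h1]
    unfold cv
    have hint : ∫ s in (0:ℝ)..t, M * (‖B‖ * (K * ((M * ‖B‖ * s) ^ N / N.factorial)))
        = K * ((M * ‖B‖ * t) ^ (N + 1) / (N + 1).factorial) := by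
      have : (fun s : ℝ => M * (‖B‖ * (K * ((M * ‖B‖ * s) ^ N / N.factorial))))
          = fun s : ℝ => (K * (M * ‖B‖) ^ (N + 1) / N.factorial) * s ^ N := by
        funext s
        rw [mul_pow]
        ring
      rw [this, intervalIntegral.integral_const_mul, integral_pow, Nat.factorial_succ]
      push_cast
      have : (N.factorial : ℝ) ≠ 0 := by positivity
      have : (N : ℝ) + 1 ≠ 0 := by positivity
      field_simp
      ring
    rw [← hint]
    refine intervalIntegral.norm_integral_le_of_norm_le h0 ?_ ?_
    · refine Eventually.of_forall fun s hs => ?_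
      have hxb := ih s hs.1.le (hs.2.trans h1)
      calc ‖ex S (t - s) (B (x N s))‖
          ≤ ‖ex S (t - s)‖ * (‖B‖ * ‖x N s‖) :=
            (ContinuousLinearMap.le_opNorm _ _).trans (mul_le_mul_of_nonneg_left
              (ContinuousLinearMap.le_opNorm _ _) (norm_nonneg _))
        _ ≤ _ := by
            gcongr
            exact hM _ (by linarith [hs.1])
    · refine Continuous.intervalIntegrable ?_ _ _
      fun_prop

lemma err_tendsto (K c : ℝ) : Tendsto (fun N : ℕ => K * (c ^ N / N.factorial)) atTop (𝓝 0) := by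
  simpa using (FloorSemiring.tendsto_pow_div_factorial_atTop c).const_mul K

lemma pic_tendsto [CompleteSpace E] {S Z : ℝ → E →L[ℝ] E} {B : E →L[ℝ] E} (h : Pert S B Z)
    (f : E) {t : ℝ} (ht : 0 ≤ t) :
    Tendsto (fun N => pic S B f N t) atTop (𝓝 (Z t f)) := by
  obtain ⟨M, hM, hMb⟩ := ex_bdd h.1 t
  obtain ⟨K, hK, hKb⟩ := ex_bdd h.2.1 t
  have hZc := ex_cont h.2.1 f
  have := err_bound B hM hMb (K := K * ‖f‖) (fun N t => ex Z t f - pic S B f N t)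
    (fun s _ hs => by
      simp only [pic, sub_zero]
      exact (ContinuousLinearMap.le_opNorm _ _).trans
        (mul_le_mul_of_nonneg_right (hKb _ hs) (norm_nonneg _)))
    (fun N s hs _ => by
      simp only [pic]
      rw [duhamel h f hs, add_sub_add_left_eq_sub, cv_sub h.1 (x := fun s => B (ex Z s f))
        (y := fun s => B (pic S B f N s)) (B.continuous.comp hZc)
        (B.continuous.comp (pic_cont h.1 B f N))]
      simp only [map_sub])
  have h2 : Tendsto (fun N => ex Z t f - pic S B f N t) atTop (𝓝 0) :=
    squeeze_zero_norm (fun N => this N t ht le_rfl) (err_tendsto _ _)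
  rw [ex_of_nonneg Z ht] at h2
  simpa using (tendsto_const_nhds (x := Z t f)).sub h2

end Abs

section Abs2
variable {E : Type*} [NormedAddCommGroup E] [NormedSpace ℝ E]

lemma pic_tail [CompleteSpace E] {S : ℝ → E →L[ℝ] E} (hS : IsC0Semigroup S) (B : E →L[ℝ] E)
    (f : E) {M K t : ℝ} (ht : 0 ≤ t) (hM0 : 0 ≤ M) (hM : ∀ s, s ≤ t → ‖ex S s‖ ≤ M)
    (hK : ∀ i s, 0 ≤ s → s ≤ t → ‖pic S B f i s‖ ≤ K) (N i : ℕ) :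
    ‖pic S B f (N + i) t - pic S B f N t‖ ≤ K * ((M * ‖B‖ * t) ^ N / N.factorial) := by
  refine err_bound B hM0 hM (fun N t => pic S B f (N + i) t - pic S B f N t) ?_ ?_ N t ht le_rfl
  · intro s h0 h1
    simpa [pic] using hK i s h0 h1
  · intro N s h0 h1
    rw [show N + 1 + i = (N + i) + 1 by ring]
    simp only [pic]
    rw [add_sub_add_left_eq_sub, cv_sub hS (x := fun s => B (pic S B f (N + i) s))
        (y := fun s => B (pic S B f N s)) (B.continuous.comp (pic_cont hS B f _))
        (B.continuous.comp (pic_cont hS B f N))]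
    simp only [map_sub]

lemma interchange [CompleteSpace E] {P : ℕ → ℕ → E} {Q : ℕ → E} {u : E} {e : ℕ → ℝ}
    (he : Tendsto e atTop (𝓝 0))
    (h : ∀ᶠ k in atTop, ∀ N i, ‖P k (N + i) - P k N‖ ≤ e N)
    (hQ : ∀ N, Tendsto (fun k => P k N) atTop (𝓝 (Q N))) (hu : Tendsto Q atTop (𝓝 u)) :
    ∃ G : ℕ → E, (∀ᶠ k in atTop, Tendsto (P k) atTop (𝓝 (G k))) ∧ Tendsto G atTop (𝓝 u) := by
  have h1 : ∀ᶠ k in atTop, ∃ g, Tendsto (P k) atTop (𝓝 g) := by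
    filter_upwards [h] with k hk
    refine cauchySeq_tendsto_of_complete (cauchySeq_of_le_tendsto_0' e (fun n m hnm => ?_) he)
    obtain ⟨i, rfl⟩ := Nat.exists_eq_add_of_le hnm
    rw [dist_comm, dist_eq_norm]
    exact hk n i
  have h2 : ∀ k, ∃ g, (∃ g, Tendsto (P k) atTop (𝓝 g)) → Tendsto (P k) atTop (𝓝 g) := by
    intro k
    by_cases hk : ∃ g, Tendsto (P k) atTop (𝓝 g)
    · exact ⟨hk.choose, fun _ => hk.choose_spec⟩
    · exact ⟨0, fun h => absurd h hk⟩
  choose G hG using h2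
  have h3 : ∀ᶠ k in atTop, Tendsto (P k) atTop (𝓝 (G k)) := by
    filter_upwards [h1] with k hk using hG k hk
  refine ⟨G, h3, ?_⟩
  rw [Metric.tendsto_atTop']
  intro η hη
  have hN : ∀ᶠ N in atTop, e N < η / 3 ∧ dist (Q N) u < η / 3 :=
    (he.eventually_lt_const (by positivity)).and
      (Metric.tendsto_nhds.1 hu _ (by positivity))
  obtain ⟨N, hN1, hN2⟩ := hN.exists
  have h4 : ∀ᶠ k in atTop, dist (G k) u < η := by
    filter_upwards [h, h3, Metric.tendsto_nhds.1 (hQ N) (η / 3) (by positivity)] with k a b c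
    have d : dist (G k) (P k N) ≤ e N := by
      rw [dist_eq_norm]
      refine le_of_tendsto (((tendsto_add_atTop_iff_nat N).2 b).sub_const (P k N)).norm ?_
      refine Eventually.of_forall fun i => ?_
      rw [add_comm]
      exact a N i
    calc dist (G k) u ≤ dist (G k) (P k N) + dist (P k N) (Q N) + dist (Q N) u :=
          dist_triangle4 _ _ _ _
      _ < η := by linarith
  obtain ⟨n, hn⟩ := eventually_atTop.1 h4
  exact ⟨n, fun k hk => hn k hk.le⟩

lemma tendsto_app {A : ℕ → E →L[ℝ] E} {M : ℝ} (hM : ∀ k, ‖A k‖ ≤ M) {x : ℕ → E} {x₀ y : E}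
    (hx : Tendsto x atTop (𝓝 x₀)) (hA : Tendsto (fun k => A k x₀) atTop (𝓝 y)) :
    Tendsto (fun k => A k (x k)) atTop (𝓝 y) := by
  have h1 : Tendsto (fun k => A k (x k - x₀)) atTop (𝓝 0) := by
    have : Tendsto (fun k => M * ‖x k - x₀‖) atTop (𝓝 0) := by
      simpa using (hx.sub_const x₀).norm.const_mul M
    refine squeeze_zero_norm (fun k => ?_) this
    exact (ContinuousLinearMap.le_opNorm _ _).trans
      (mul_le_mul_of_nonneg_right (hM k) (norm_nonneg _))
  simpa using h1.add hA

lemma pic_bdd {S : ℕ → ℝ → E →L[ℝ] E}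
    (hbd : ∀ τ, ∃ M, 0 ≤ M ∧ ∀ k t, t ≤ τ → ‖ex (S k) t‖ ≤ M) (B : E →L[ℝ] E) (f : E) (τ : ℝ)
    (N : ℕ) : ∃ C, 0 ≤ C ∧ ∀ k t, 0 ≤ t → t ≤ τ → ‖pic (S k) B f N t‖ ≤ C := by
  obtain ⟨M, hM0, hM⟩ := hbd τ
  induction N with
  | zero => exact ⟨0, le_rfl, fun k t _ _ => by simp [pic]⟩
  | succ N ih =>
    obtain ⟨C, hC0, hC⟩ := ih
    refine ⟨M * ‖f‖ + M * (‖B‖ * C) * |τ|, by positivity, fun k t h0 h1 => ?_⟩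
    simp only [pic]
    refine (norm_add_le _ _).trans (add_le_add ?_ ?_)
    · exact (ContinuousLinearMap.le_opNorm _ _).trans
        (mul_le_mul_of_nonneg_right (hM k t h1) (norm_nonneg _))
    · unfold cv
      refine (intervalIntegral.norm_integral_le_of_norm_le_const
        (C := M * (‖B‖ * C)) fun s hs => ?_).trans ?_
      · rw [uIoc_of_le h0] at hs
        calc ‖ex (S k) (t - s) (B (pic (S k) B f N s))‖
            ≤ ‖ex (S k) (t - s)‖ * (‖B‖ * ‖pic (S k) B f N s‖) :=
              (ContinuousLinearMap.le_opNorm _ _).trans (mul_le_mul_of_nonneg_left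
                (ContinuousLinearMap.le_opNorm _ _) (norm_nonneg _))
          _ ≤ _ := by
            gcongr
            · exact hM _ _ (by linarith [hs.1])
            · exact hC k s hs.1.le (hs.2.trans h1)
      · rw [sub_zero, abs_of_nonneg h0]
        exact mul_le_mul_of_nonneg_left (h1.trans (le_abs_self _)) (by positivity)

lemma pic_lim [CompleteSpace E] {S : ℕ → ℝ → E →L[ℝ] E} (hS : ∀ k, IsC0Semigroup (S k))
    (hbd : ∀ τ, ∃ M, 0 ≤ M ∧ ∀ k t, t ≤ τ → ‖ex (S k) t‖ ≤ M)
    (F : Submodule ℝ E) [CompleteSpace F] {R : ℝ → F →L[ℝ] F} (hR : IsC0Semigroup R)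
    {B : E →L[ℝ] E} {BF : F →L[ℝ] F} (hBF : ∀ x : F, ((BF x : F) : E) = B x) {f : E} {f' : F}
    (hlim : ∀ t, 0 < t → Tendsto (fun k => S k t f) atTop (𝓝 ((R t f' : F) : E)))
    (hlimF : ∀ t, 0 < t → ∀ x : F, Tendsto (fun k => S k t x) atTop (𝓝 ((R t x : F) : E)))
    (N : ℕ) : ∀ t, 0 < t →
      Tendsto (fun k => pic (S k) B f N t) atTop (𝓝 ((pic R BF f' N t : F) : E)) := by
  induction N with
  | zero => intro t _; simp [pic]
  | succ N ih =>
    intro t ht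
    simp only [pic, Submodule.coe_add]
    obtain ⟨M, hM0, hM⟩ := hbd t
    obtain ⟨C, hC0, hC⟩ := pic_bdd hbd B f t N
    have hc : Continuous fun s => ex R (t - s) (BF (pic R BF f' N s)) :=
      cv_integrand hR (BF.continuous.comp (pic_cont hR BF f' N)) t
    refine Tendsto.add ?_ ?_
    · simp only [ex_of_nonneg _ ht.le]
      exact hlim t ht
    · have e : ((cv R (fun s => BF (pic R BF f' N s)) t : F) : E)
          = ∫ s in (0:ℝ)..t, ((ex R (t - s) (BF (pic R BF f' N s)) : F) : E) := by
        unfold cv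
        exact (F.subtypeL.intervalIntegral_comp_comm (hc.intervalIntegrable _ _)).symm
      rw [e]
      unfold cv
      refine intervalIntegral.tendsto_integral_filter_of_dominated_convergence
        (fun _ => M * (‖B‖ * C)) ?_ ?_ (by simp) ?_
      · exact Eventually.of_forall fun k =>
          (cv_integrand (hS k) (B.continuous.comp (pic_cont (hS k) B f N)) t).aestronglyMeasurable
      · refine Eventually.of_forall fun k => Eventually.of_forall fun s hs => ?_
        rw [uIoc_of_le ht.le] at hs
        calc ‖ex (S k) (t - s) (B (pic (S k) B f N s))‖
            ≤ ‖ex (S k) (t - s)‖ * (‖B‖ * ‖pic (S k) B f N s‖) :=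
              (ContinuousLinearMap.le_opNorm _ _).trans (mul_le_mul_of_nonneg_left
                (ContinuousLinearMap.le_opNorm _ _) (norm_nonneg _))
          _ ≤ _ := by
            gcongr
            · exact hM _ _ (by linarith [hs.1])
            · exact hC k s hs.1.le hs.2
      · have hne : ∀ᵐ s : ℝ, s ≠ t := by simp [ae_iff, measure_singleton]
        filter_upwards [hne] with s hst hs
        rw [uIoc_of_le ht.le] at hs
        have hst' : 0 < t - s := sub_pos.2 (lt_of_le_of_ne hs.2 hst)
        refine tendsto_app (fun k => hM k (t - s) (by linarith [hs.1]))
          ((B.continuous.tendsto _).comp (ih s hs.1)) ?_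
        simp only [ex_of_nonneg _ hst'.le]
        rw [← hBF]
        exact hlimF _ hst' _

end Abs2

section Ord
variable {E : Type*} [NormedAddCommGroup E] [NormedSpace ℝ E] [CompleteSpace E]
  [PartialOrder E] [IsOrderedAddMonoid E] [IsOrderedModule ℝ E] [OrderClosedTopology E]

/-- positive operators -/
def Pos (B : E →L[ℝ] E) : Prop := ∀ f, 0 ≤ f → 0 ≤ B f


lemma Pos.mono {B : E →L[ℝ] E} (h : Pos B) {f g : E} (hfg : f ≤ g) : B f ≤ B g := by
  have := h _ (sub_nonneg.2 hfg)
  rwa [map_sub, sub_nonneg] at this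

lemma ex_pos {S : ℝ → E →L[ℝ] E} (hp : ∀ t, 0 ≤ t → Pos (S t)) (t : ℝ) : Pos (ex S t) :=
  hp _ (le_max_right _ _)

lemma cv_mono {S : ℝ → E →L[ℝ] E} (hS : IsC0Semigroup S) (hp : ∀ t, 0 ≤ t → Pos (S t))
    {x y : ℝ → E} (hx : Continuous x) (hy : Continuous y) {t : ℝ} (ht : 0 ≤ t)
    (h : ∀ s, 0 ≤ s → x s ≤ y s) : cv S x t ≤ cv S y t := by
  unfold cv
  rw [intervalIntegral.integral_of_le ht, intervalIntegral.integral_of_le ht]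
  refine setIntegral_mono_on
    (((cv_integrand hS hx t).intervalIntegrable 0 t).1)
    (((cv_integrand hS hy t).intervalIntegrable 0 t).1) measurableSet_Ioc ?_
  intro s hs
  exact (ex_pos hp _).mono (h s hs.1.le)

lemma cv_zero (S : ℝ → E →L[ℝ] E) (t : ℝ) : cv S (fun _ => 0) t = 0 := by simp [cv]

lemma cv_nonneg {S : ℝ → E →L[ℝ] E} (hS : IsC0Semigroup S) (hp : ∀ t, 0 ≤ t → Pos (S t))
    {x : ℝ → E} (hx : Continuous x) {t : ℝ} (ht : 0 ≤ t)
    (h : ∀ s, 0 ≤ s → 0 ≤ x s) : 0 ≤ cv S x t := by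
  have := cv_mono hS hp continuous_const hx ht h
  rwa [cv_zero] at this

lemma pic_nonneg {S : ℝ → E →L[ℝ] E} (hS : IsC0Semigroup S) (hp : ∀ t, 0 ≤ t → Pos (S t))
    {B : E →L[ℝ] E} (hB : Pos B) {f : E} (hf : 0 ≤ f) (N : ℕ) :
    ∀ t, 0 ≤ t → 0 ≤ pic S B f N t := by
  induction N with
  | zero => intro t _; simp [pic]
  | succ N ih =>
    intro t ht
    exact add_nonneg (ex_pos hp t f hf)
      (cv_nonneg hS hp (B.continuous.comp (pic_cont hS B f N)) ht fun s hs => hB _ (ih s hs))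

lemma pic_mono {S : ℝ → E →L[ℝ] E} (hS : IsC0Semigroup S) (hp : ∀ t, 0 ≤ t → Pos (S t))
    {B B' : E →L[ℝ] E} (hB : Pos B) (hBB : Pos (B' - B)) {f : E} (hf : 0 ≤ f) (N : ℕ) :
    ∀ t, 0 ≤ t → pic S B f N t ≤ pic S B' f N t := by
  have hB' : Pos B' := fun g hg => by
    have := add_nonneg (hB g hg) (hBB g hg)
    simpa using this
  induction N with
  | zero => intro t _; simp [pic]
  | succ N ih =>
    intro t ht
    refine add_le_add le_rfl (cv_mono hS hp (B.continuous.comp (pic_cont hS B f N))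
      (B'.continuous.comp (pic_cont hS B' f N)) ht fun s hs => ?_)
    have h1 := hBB _ (pic_nonneg hS hp hB hf N s hs)
    rw [ContinuousLinearMap.sub_apply, sub_nonneg] at h1
    exact h1.trans (hB'.mono (ih s hs))

lemma pert_pos {S Z : ℝ → E →L[ℝ] E} {B : E →L[ℝ] E} (h : Pert S B Z)
    (hp : ∀ t, 0 ≤ t → Pos (S t)) (hB : Pos B) : ∀ t, 0 ≤ t → Pos (Z t) := fun t ht f hf =>
  ge_of_tendsto' (pic_tendsto h f ht) fun N => pic_nonneg h.1 hp hB hf N t ht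

lemma pic_le {S Z : ℝ → E →L[ℝ] E} {B : E →L[ℝ] E} (h : Pert S B Z)
    (hp : ∀ t, 0 ≤ t → Pos (S t)) (hB : Pos B) {f : E} (hf : 0 ≤ f) (N : ℕ) :
    ∀ t, 0 ≤ t → pic S B f N t ≤ Z t f := by
  induction N with
  | zero => intro t ht; exact pert_pos h hp hB t ht f hf
  | succ N ih =>
    intro t ht
    rw [← ex_of_nonneg Z ht, duhamel h f ht]
    refine add_le_add le_rfl (cv_mono h.1 hp (B.continuous.comp (pic_cont h.1 B f N))
      (B.continuous.comp (ex_cont h.2.1 f)) ht fun s hs => hB.mono ?_)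
    show pic S B f N s ≤ ex Z s f
    rw [ex_of_nonneg Z hs]
    exact ih s hs

lemma pert_ge {S Z : ℝ → E →L[ℝ] E} {B : E →L[ℝ] E} (h : Pert S B Z)
    (hp : ∀ t, 0 ≤ t → Pos (S t)) (hB : Pos B) {f : E} (hf : 0 ≤ f) {t : ℝ} (ht : 0 ≤ t) :
    S t f ≤ Z t f := by
  have := pic_le h hp hB hf 1 t ht
  simpa [pic, cv_zero, ex_of_nonneg S ht] using this

lemma pic_conv {S : ℝ → E →L[ℝ] E} (hS : IsC0Semigroup S) (hp : ∀ t, 0 ≤ t → Pos (S t))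
    {B₀ Bθ B₁ : E →L[ℝ] E} {θ : ℝ} (h0 : 0 ≤ θ) (h1 : θ ≤ 1) (hB₀ : Pos B₀) (hBθ : Pos Bθ)
    (hB : Pos (B₁ - B₀)) (hc : Pos ((1 - θ) • B₀ + θ • B₁ - Bθ)) {f : E} (hf : 0 ≤ f) (N : ℕ) :
    ∀ t, 0 ≤ t → pic S Bθ f N t ≤ (1 - θ) • pic S B₀ f N t + θ • pic S B₁ f N t := by
  have hB₁ : Pos B₁ := fun g hg => by
    have := add_nonneg (hB₀ g hg) (hB g hg)
    simpa using this
  have hθ : 0 ≤ 1 - θ := sub_nonneg.2 h1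
  induction N with
  | zero => intro t _; simp [pic]
  | succ N ih =>
    intro t ht
    have c0 : Continuous fun s => B₀ (pic S B₀ f N s) := B₀.continuous.comp (pic_cont hS B₀ f N)
    have cθ : Continuous fun s => Bθ (pic S Bθ f N s) := Bθ.continuous.comp (pic_cont hS Bθ f N)
    have c1 : Continuous fun s => B₁ (pic S B₁ f N s) := B₁.continuous.comp (pic_cont hS B₁ f N)
    have key : cv S (fun s => Bθ (pic S Bθ f N s)) t ≤
        (1 - θ) • cv S (fun s => B₀ (pic S B₀ f N s)) t
          + θ • cv S (fun s => B₁ (pic S B₁ f N s)) t := by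
      have e : (1 - θ) • cv S (fun s => B₀ (pic S B₀ f N s)) t
          + θ • cv S (fun s => B₁ (pic S B₁ f N s)) t
          = cv S (fun s => (1 - θ) • B₀ (pic S B₀ f N s) + θ • B₁ (pic S B₁ f N s)) t := by
        have d0 : Continuous fun s => (1 - θ) • ex S (t - s) (B₀ (pic S B₀ f N s)) :=
          (cv_integrand hS c0 t).const_smul (1 - θ)
        have d1 : Continuous fun s => θ • ex S (t - s) (B₁ (pic S B₁ f N s)) :=
          (cv_integrand hS c1 t).const_smul θ
        unfold cv
        rw [← intervalIntegral.integral_smul, ← intervalIntegral.integral_smul,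
          ← intervalIntegral.integral_add (d0.intervalIntegrable _ _) (d1.intervalIntegrable _ _)]
        simp only [map_add, map_smul]
      rw [e]
      have d2 : Continuous fun s => (1 - θ) • B₀ (pic S B₀ f N s) + θ • B₁ (pic S B₁ f N s) :=
        (c0.const_smul _).add (c1.const_smul _)
      refine cv_mono hS hp cθ d2 ht fun s hs => ?_
      have p0 := pic_nonneg hS hp hB₀ hf N s hs
      have p1 := pic_nonneg hS hp hB₁ hf N s hs
      have p01 := pic_mono hS hp hB₀ hB hf N s hs
      have hI := ih s hs
      set a := pic S B₀ f N s
      set b := pic S Bθ f N s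
      set c := pic S B₁ f N s
      set y := (1 - θ) • a + θ • c with hy
      have y0 : 0 ≤ y := add_nonneg (smul_nonneg hθ p0) (smul_nonneg h0 p1)
      have s1 : Bθ b ≤ Bθ y := hBθ.mono hI
      have s2 : Bθ y ≤ (1 - θ) • B₀ y + θ • B₁ y := by
        have := hc y y0
        simpa using this
      have s3 : 0 ≤ ((1 - θ) * θ) • (B₁ - B₀) (c - a) :=
        smul_nonneg (mul_nonneg hθ h0) (hB _ (sub_nonneg.2 p01))
      have s4 : (1 - θ) • B₀ a + θ • B₁ c
          = (1 - θ) • B₀ y + θ • B₁ y + ((1 - θ) * θ) • (B₁ - B₀) (c - a) := by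
        simp only [hy, map_add, map_smul, map_sub, ContinuousLinearMap.sub_apply]
        module
      show Bθ b ≤ (1 - θ) • B₀ a + θ • B₁ c
      rw [s4]
      exact (s1.trans s2).trans (le_add_of_nonneg_right s3)
    simp only [pic]
    calc ex S t f + cv S (fun s => Bθ (pic S Bθ f N s)) t
        ≤ ex S t f + ((1 - θ) • cv S (fun s => B₀ (pic S B₀ f N s)) t
          + θ • cv S (fun s => B₁ (pic S B₁ f N s)) t) := add_le_add le_rfl key
      _ = _ := by module

end Ord

section LpM
variable {Ω : Type*} [MeasurableSpace Ω] {μ : Measure Ω} {p : ℝ≥0∞} [Fact (1 ≤ p)]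

instance lpOrd : IsOrderedModule ℝ (Lp ℝ p μ) where
  smul_le_smul_of_nonneg_left := by
    intro a ha f g hfg
    rw [← Lp.coeFn_le] at hfg ⊢
    filter_upwards [hfg, Lp.coeFn_smul a f, Lp.coeFn_smul a g] with ω h1 h2 h3
    rw [h2, h3]
    exact mul_le_mul_of_nonneg_left h1 ha
  smul_le_smul_of_nonneg_right := by
    intro f hf a b hab
    rw [← Lp.coeFn_nonneg] at hf
    rw [← Lp.coeFn_le]
    filter_upwards [hf, Lp.coeFn_smul a f, Lp.coeFn_smul b f] with ω h1 h2 h3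
    rw [h2, h3]
    exact mul_le_mul_of_nonneg_right hab h1

/-- bounded multipliers -/
def Good (μ : Measure Ω) (p : ℝ≥0∞) (W : Ω → ℝ) : Prop :=
  (∃ C, 0 ≤ C ∧ ∀ ω, |W ω| ≤ C) ∧
    ∀ f : Lp ℝ p μ, AEStronglyMeasurable (fun ω => W ω * f ω) μ

lemma Good.memLp {W : Ω → ℝ} (h : Good μ p W) (f : Lp ℝ p μ) :
    MemLp (fun ω => W ω * f ω) p μ := by
  obtain ⟨C, hC0, hC⟩ := h.1
  refine (Lp.memLp f).of_le_mul (c := C) (h.2 f) (Eventually.of_forall fun ω => ?_)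
  rw [norm_mul]
  exact mul_le_mul_of_nonneg_right (hC ω) (norm_nonneg _)

/-- multiplication as a linear map -/
def MulL {W : Ω → ℝ} (h : Good μ p W) : Lp ℝ p μ →ₗ[ℝ] Lp ℝ p μ where
  toFun f := (h.memLp f).toLp _
  map_add' f g := by
    apply Lp.ext
    filter_upwards [(h.memLp (f + g)).coeFn_toLp, (h.memLp f).coeFn_toLp, (h.memLp g).coeFn_toLp,
      Lp.coeFn_add f g, Lp.coeFn_add ((h.memLp f).toLp _) ((h.memLp g).toLp _)] with ω a b c d e
    rw [a, e, Pi.add_apply, b, c, d, Pi.add_apply]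
    ring
  map_smul' r f := by
    apply Lp.ext
    filter_upwards [(h.memLp (r • f)).coeFn_toLp, (h.memLp f).coeFn_toLp,
      Lp.coeFn_smul r f, Lp.coeFn_smul r ((h.memLp f).toLp _)] with ω a b d e
    rw [a, d, RingHom.id_apply, e, Pi.smul_apply, Pi.smul_apply, b]
    simp only [smul_eq_mul]
    ring

open Classical in
/-- multiplication operator -/
def Mul (μ : Measure Ω) (p : ℝ≥0∞) [Fact (1 ≤ p)] (W : Ω → ℝ) : Lp ℝ p μ →L[ℝ] Lp ℝ p μ :=
  if h : Good μ p W then (MulL h).mkContinuous h.1.choose (fun f => by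
    refine Lp.norm_le_mul_norm_of_ae_le_mul ?_
    filter_upwards [(h.memLp f).coeFn_toLp] with ω a
    show ‖(h.memLp f).toLp _ ω‖ ≤ _
    rw [a, norm_mul]
    exact mul_le_mul_of_nonneg_right (h.1.choose_spec.2 ω) (norm_nonneg _)) else 0

lemma Mul_coe {W : Ω → ℝ} (h : Good μ p W) (f : Lp ℝ p μ) :
    Mul μ p W f =ᵐ[μ] fun ω => W ω * f ω := by
  unfold Mul
  rw [dif_pos h]
  exact (h.memLp f).coeFn_toLp

lemma Good.add {W W' : Ω → ℝ} (h : Good μ p W) (h' : Good μ p W') :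
    Good μ p (fun ω => W ω + W' ω) := by
  obtain ⟨C, hC0, hC⟩ := h.1
  obtain ⟨C', hC0', hC'⟩ := h'.1
  refine ⟨⟨C + C', by positivity, fun ω => (abs_add_le _ _).trans (add_le_add (hC ω) (hC' ω))⟩,
    fun f => ?_⟩
  simp only [add_mul]
  exact (h.2 f).add (h'.2 f)

lemma Good.smul {W : Ω → ℝ} (h : Good μ p W) (a : ℝ) : Good μ p (fun ω => a * W ω) := by
  obtain ⟨C, hC0, hC⟩ := h.1
  refine ⟨⟨|a| * C, by positivity, fun ω => ?_⟩, fun f => ?_⟩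
  · rw [abs_mul]
    exact mul_le_mul_of_nonneg_left (hC ω) (abs_nonneg _)
  · simp only [mul_assoc]
    exact (h.2 f).const_mul a

lemma Good.const (a : ℝ) : Good μ p (fun _ => a) :=
  ⟨⟨|a|, abs_nonneg a, fun _ => le_rfl⟩, fun f => (Lp.aestronglyMeasurable f).const_mul a⟩

lemma Good.sub {W W' : Ω → ℝ} (h : Good μ p W) (h' : Good μ p W') :
    Good μ p (fun ω => W ω - W' ω) := by
  have := h.add (h'.smul (-1))
  simpa [sub_eq_add_neg] using this

lemma Mul_pos {W : Ω → ℝ} (h : Good μ p W) (h0 : ∀ ω, 0 ≤ W ω) : Pos (Mul μ p W) := by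
  intro f hf
  rw [← Lp.coeFn_nonneg] at hf ⊢
  filter_upwards [hf, Mul_coe h f] with ω a b
  rw [b]
  exact mul_nonneg (h0 ω) a

lemma Mul_sub {W W' : Ω → ℝ} (h : Good μ p W) (h' : Good μ p W') :
    Mul μ p W - Mul μ p W' = Mul μ p (fun ω => W ω - W' ω) := by
  ext1 f
  apply Lp.ext
  filter_upwards [Mul_coe h f, Mul_coe h' f, Mul_coe (h.sub h') f,
    Lp.coeFn_sub (Mul μ p W f) (Mul μ p W' f)] with ω a b c d
  rw [c, sub_apply, d, Pi.sub_apply, a, b]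
  ring

lemma Mul_add {W W' : Ω → ℝ} (h : Good μ p W) (h' : Good μ p W') :
    Mul μ p W + Mul μ p W' = Mul μ p (fun ω => W ω + W' ω) := by
  ext1 f
  apply Lp.ext
  filter_upwards [Mul_coe h f, Mul_coe h' f, Mul_coe (h.add h') f,
    Lp.coeFn_add (Mul μ p W f) (Mul μ p W' f)] with ω a b c d
  rw [c, add_apply, d, Pi.add_apply, a, b]
  ring

lemma Mul_smul {W : Ω → ℝ} (h : Good μ p W) (r : ℝ) :
    r • Mul μ p W = Mul μ p (fun ω => r * W ω) := by
  ext1 f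
  apply Lp.ext
  filter_upwards [Mul_coe h f, Mul_coe (h.smul r) f,
    Lp.coeFn_smul r (Mul μ p W f)] with ω a c d
  rw [c, smul_apply, d, Pi.smul_apply, a, smul_eq_mul]
  ring

lemma trunc_nonneg (V : Ω → ℝ≥0∞) (n : ℕ) (ω : Ω) : 0 ≤ trunc V n ω := ENNReal.toReal_nonneg

lemma trunc_le (V : Ω → ℝ≥0∞) (n : ℕ) (ω : Ω) : trunc V n ω ≤ n := by
  have := ENNReal.toReal_mono (ENNReal.natCast_ne_top n) (min_le_right (V ω) (n : ℝ≥0∞))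
  simpa [trunc] using this

lemma good_trunc (hp : p ≠ ∞) {V : Ω → ℝ≥0∞} (hV : LocallyMeasurable μ V) (n : ℕ) :
    Good μ p (trunc V n) := by
  refine ⟨⟨n, Nat.cast_nonneg n, fun ω => by
    rw [abs_of_nonneg (trunc_nonneg V n ω)]; exact trunc_le V n ω⟩, fun f => ?_⟩
  have hp0 : p ≠ 0 := (lt_of_lt_of_le zero_lt_one Fact.out).ne'
  obtain ⟨t, ht, hz, hσ⟩ := ((Lp.memLp f).aefinStronglyMeasurable hp0 hp).exists_set_sigmaFinite
  have hfin : ∀ B, MeasurableSet B → μ B < ∞ →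
      AEStronglyMeasurable (fun ω => trunc V n ω * f ω) (μ.restrict B) := by
    intro B hB hμ
    obtain ⟨g, hg, hVg⟩ := hV B hB hμ
    have h1 : AEStronglyMeasurable (fun ω => trunc g n ω * f ω) (μ.restrict B) := by
      have : Measurable (trunc g n) := (hg.min measurable_const).ennreal_toReal
      exact this.aestronglyMeasurable.mul (Lp.aestronglyMeasurable f).restrict
    refine h1.congr ?_
    filter_upwards [hVg] with ω h
    simp only [trunc, h]
  suffices H : AEStronglyMeasurable (fun ω => trunc V n ω * f ω) (μ.restrict (t ∪ tᶜ)) by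
    rwa [union_compl_self, Measure.restrict_univ] at H
  rw [aestronglyMeasurable_union_iff]
  constructor
  · have e : t = ⋃ i, spanningSets (μ.restrict t) i ∩ t := by
      rw [← iUnion_inter, iUnion_spanningSets, univ_inter]
    rw [e, aestronglyMeasurable_iUnion_iff]
    intro i
    refine hfin _ ((measurableSet_spanningSets _ i).inter ht) ?_
    rw [← Measure.restrict_apply (measurableSet_spanningSets _ i)]
    exact measure_spanningSets_lt_top _ i
  · refine (aestronglyMeasurable_const (b := (0:ℝ))).congr ?_
    filter_upwards [hz] with ω h
    simp [h]

lemma locmeas_smul {V : Ω → ℝ≥0∞} (hV : LocallyMeasurable μ V) (ε : ℝ) :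
    LocallyMeasurable μ (smulRate ε V) := by
  intro B hB hμ
  obtain ⟨g, hg, h⟩ := hV B hB hμ
  refine ⟨smulRate ε g, hg.const_mul _, ?_⟩
  filter_upwards [h] with ω e
  simp only [smulRate, e]

/-- rescaling -/
def resc {E : Type*} [NormedAddCommGroup E] [NormedSpace ℝ E] (c : ℝ) (S : ℝ → E →L[ℝ] E) :
    ℝ → E →L[ℝ] E := fun t => Real.exp (c * t) • S t

lemma resc_c0 {E : Type*} [NormedAddCommGroup E] [NormedSpace ℝ E] (c : ℝ) {S : ℝ → E →L[ℝ] E}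
    (hS : IsC0Semigroup S) : IsC0Semigroup (resc c S) := by
  refine ⟨⟨?_, ?_⟩, ?_⟩
  · simp [resc, hS.1.1]
  · intro s t hs ht
    ext1 f
    simp only [resc, hS.1.2 s t hs ht, mul_add, Real.exp_add, smul_apply,
      ContinuousLinearMap.comp_apply, map_smul, smul_smul]
    rw [mul_comm]
  · intro f
    have h1 : Continuous fun t : ℝ => Real.exp (c * t) := by fun_prop
    exact h1.continuousOn.smul (hS.2 f)

lemma resc_gen' {E : Type*} [NormedAddCommGroup E] [NormedSpace ℝ E] (c : ℝ)
    {S : ℝ → E →L[ℝ] E} {f g : E} (h : InGenerator S f g) :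
    InGenerator (resc c S) f (g + c • f) := by
  unfold InGenerator at *
  have h1 : Tendsto (fun t : ℝ => Real.exp (c * t)) (𝓝[>] 0) (𝓝 1) := by
    have : Continuous fun t : ℝ => Real.exp (c * t) := by fun_prop
    have := this.tendsto 0
    simp only [mul_zero, Real.exp_zero] at this
    exact this.mono_left nhdsWithin_le_nhds
  have h2 : Tendsto (fun t : ℝ => t⁻¹ * (Real.exp (c * t) - 1)) (𝓝[>] 0) (𝓝 c) := by
    have hd : HasDerivAt (fun t : ℝ => Real.exp (c * t)) c 0 := by
      have := ((hasDerivAt_id (0:ℝ)).const_mul c).exp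
      simpa using this
    have := hd.tendsto_slope_zero_right
    simpa using this
  have := (h1.smul h).add (h2.smul_const f)
  rw [one_smul] at this
  refine this.congr fun t => ?_
  simp only [resc, smul_apply]
  module

lemma resc_resc {E : Type*} [NormedAddCommGroup E] [NormedSpace ℝ E] (c : ℝ)
    (S : ℝ → E →L[ℝ] E) : resc (-c) (resc c S) = S := by
  funext t
  simp only [resc, smul_smul, ← Real.exp_add]
  simp

lemma resc_gen {E : Type*} [NormedAddCommGroup E] [NormedSpace ℝ E] (c : ℝ)
    {S : ℝ → E →L[ℝ] E} {f g : E} :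
    InGenerator (resc c S) f g ↔ InGenerator S f (g - c • f) := by
  constructor
  · intro h
    have := resc_gen' (-c) h
    rw [resc_resc] at this
    convert this using 1
    module
  · intro h
    have := resc_gen' c h
    simpa using this

variable {T : ℝ → Lp ℝ p μ →L[ℝ] Lp ℝ p μ}

lemma pg_resc {S : ℝ → Lp ℝ p μ →L[ℝ] Lp ℝ p μ} {W : Ω → ℝ} (h : IsPerturbedSG μ p T S W)
    (c : ℝ) : IsPerturbedSG μ p T (resc c S) (fun ω => W ω - c) := by
  refine ⟨resc_c0 c h.1, fun f g => ?_⟩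
  rw [resc_gen, h.2]
  refine exists_congr fun g₀ => and_congr_right fun _ => ?_
  constructor
  · intro H
    filter_upwards [H, Lp.coeFn_sub g (c • f), Lp.coeFn_smul c f] with ω a b d
    rw [b, Pi.sub_apply, d, Pi.smul_apply, smul_eq_mul] at a
    linarith
  · intro H
    filter_upwards [H, Lp.coeFn_sub g (c • f), Lp.coeFn_smul c f] with ω a b d
    rw [b, Pi.sub_apply, d, Pi.smul_apply, smul_eq_mul]
    linarith

lemma pg_self (hT : IsC0Semigroup T) : IsPerturbedSG μ p T T (fun _ => 0) := by
  refine ⟨hT, fun f g => ⟨fun h => ⟨g, h, by simp⟩, ?_⟩⟩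
  rintro ⟨g₀, h, e⟩
  have : g = g₀ := Lp.ext (by simpa using e)
  rwa [this]

lemma pg_pert {S S' : ℝ → Lp ℝ p μ →L[ℝ] Lp ℝ p μ} {W W' : Ω → ℝ}
    (h : IsPerturbedSG μ p T S W) (h' : IsPerturbedSG μ p T S' W')
    (hW : Good μ p W) (hW' : Good μ p W') : Pert S (Mul μ p (fun ω => W ω - W' ω)) S' := by
  refine ⟨h.1, h'.1, fun f g hg => ?_⟩
  obtain ⟨g₀, h0, e⟩ := (h'.2 f g).1 hg
  refine (h.2 _ _).2 ⟨g₀, h0, ?_⟩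
  filter_upwards [e, Lp.coeFn_sub g (Mul μ p (fun ω => W ω - W' ω) f),
    Mul_coe (hW.sub hW') f] with ω a b c
  rw [b, Pi.sub_apply, a, c]
  ring

lemma pg_pos (hT : IsC0Semigroup T) (hp : IsPositiveSG T) {S : ℝ → Lp ℝ p μ →L[ℝ] Lp ℝ p μ}
    {W : Ω → ℝ} (h : IsPerturbedSG μ p T S W) (hW : Good μ p W) :
    ∀ t, 0 ≤ t → Pos (S t) := by
  obtain ⟨c, hc0, hc⟩ := hW.1
  have hG : Good μ p (fun ω => W ω - c) := hW.sub (Good.const c)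
  have h1 := pg_pert (pg_self hT) (pg_resc h c) (Good.const 0) hG
  intro t ht f hf
  have h2 := pert_pos h1 hp (Mul_pos ((Good.const 0).sub hG)
    fun ω => by have := (abs_le.1 (hc ω)).2; linarith) t ht f hf
  have h3 := smul_nonneg (Real.exp_pos (-c * t)).le h2
  have e := congrFun (resc_resc c S) t
  rw [← e]
  exact h3

lemma pg_mono (hT : IsC0Semigroup T) (hp : IsPositiveSG T)
    {S S' : ℝ → Lp ℝ p μ →L[ℝ] Lp ℝ p μ} {W W' : Ω → ℝ}
    (h : IsPerturbedSG μ p T S W) (h' : IsPerturbedSG μ p T S' W')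
    (hW : Good μ p W) (hW' : Good μ p W') (hle : ∀ ω, W' ω ≤ W ω) {f : Lp ℝ p μ} (hf : 0 ≤ f)
    {t : ℝ} (ht : 0 ≤ t) : S t f ≤ S' t f :=
  pert_ge (pg_pert h h' hW hW') (pg_pos hT hp h hW)
    (Mul_pos (hW.sub hW') fun ω => sub_nonneg.2 (hle ω)) hf ht

lemma norm_le_of {x y : Lp ℝ p μ} (h0 : 0 ≤ x) (h : x ≤ y) : ‖x‖ ≤ ‖y‖ := by
  apply norm_le_norm_of_abs_le_abs
  rw [abs_of_nonneg h0, abs_of_nonneg (h0.trans h)]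
  exact h

lemma pg_bdd (hT : IsC0Semigroup T) (hp : IsPositiveSG T)
    {S : ℕ → ℝ → Lp ℝ p μ →L[ℝ] Lp ℝ p μ} {W : ℕ → Ω → ℝ}
    (h : ∀ n, IsPerturbedSG μ p T (S n) (W n)) (hW : ∀ n, Good μ p (W n))
    (h0 : ∀ n ω, 0 ≤ W n ω) (τ : ℝ) : ∃ M, 0 ≤ M ∧ ∀ k t, t ≤ τ → ‖ex (S k) t‖ ≤ M := by
  obtain ⟨M, hM0, hM⟩ := ex_bdd hT τ
  refine ⟨2 * M, by positivity, fun k t ht => ?_⟩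
  refine ContinuousLinearMap.opNorm_le_bound _ (by positivity) fun f => ?_
  have key : ∀ g : Lp ℝ p μ, 0 ≤ g → ‖g‖ ≤ ‖f‖ → ‖ex (S k) t g‖ ≤ M * ‖f‖ := by
    intro g hg hgf
    have h1 : ex (S k) t g ≤ ex T t g :=
      pg_mono hT hp (h k) (pg_self hT) (hW k) (Good.const 0) (h0 k) hg (le_max_right _ _)
    have h2 : 0 ≤ ex (S k) t g := ex_pos (pg_pos hT hp (h k) (hW k)) t g hg
    refine (norm_le_of h2 h1).trans ?_
    exact (ContinuousLinearMap.le_opNorm _ _).trans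
      (mul_le_mul (hM t ht) hgf (norm_nonneg _) hM0)
  have hpn : f⁺ - f⁻ = f := posPart_sub_negPart f
  have a1 := key f⁺ (posPart_nonneg f) (by
    apply norm_le_norm_of_abs_le_abs
    rw [abs_of_nonneg (posPart_nonneg f)]
    exact sup_le (le_abs_self f) (abs_nonneg f))
  have a2 := key f⁻ (negPart_nonneg f) (by
    apply norm_le_norm_of_abs_le_abs
    rw [abs_of_nonneg (negPart_nonneg f)]
    exact sup_le (neg_le_abs f) (abs_nonneg f))
  calc ‖ex (S k) t f‖ = ‖ex (S k) t f⁺ - ex (S k) t f⁻‖ := by rw [← map_sub, hpn]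
    _ ≤ _ := norm_sub_le _ _
    _ ≤ 2 * M * ‖f‖ := by linarith

end LpM

section Main
variable {Ω : Type*} [MeasurableSpace Ω] {μ : Measure Ω} {p : ℝ≥0∞} [Fact (1 ≤ p)]
  {T : ℝ → Lp ℝ p μ →L[ℝ] Lp ℝ p μ}

lemma stepA (hp : p ≠ ∞) (hT : IsC0Semigroup T) (hTpos : IsPositiveSG T)
    {V : Ω → ℝ≥0∞} (hV : LocallyMeasurable μ V)
    {S : ℕ → ℝ → Lp ℝ p μ →L[ℝ] Lp ℝ p μ}
    (hS : ∀ n : ℕ, IsPerturbedSG μ p T (S n) (trunc V n))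
    {TV : ℝ → Lp ℝ p μ →L[ℝ] Lp ℝ p μ}
    (hTV : ∀ t : ℝ, 0 ≤ t → ∀ f : Lp ℝ p μ,
      Tendsto (fun n : ℕ => S n t f) atTop (𝓝 (TV t f)))
    {P : Lp ℝ p μ →L[ℝ] Lp ℝ p μ}
    (hP : ∀ f : Lp ℝ p μ, Tendsto (fun t : ℝ => TV t f) (𝓝[>] (0 : ℝ)) (𝓝 (P f)))
    (hPband : IsBandProjection P)
    {F : Submodule ℝ (Lp ℝ p μ)} (hF : (F : Set (Lp ℝ p μ)) = Set.range P)
    {TVr : ℝ → F →L[ℝ] F}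
    (hTVr : ∀ t : ℝ, 0 ≤ t → ∀ f : F, ((TVr t f : F) : Lp ℝ p μ) = TV t (f : Lp ℝ p μ))
    (hTVrC0 : IsC0Semigroup TVr)
    {U : ℕ → ℝ → F →L[ℝ] F}
    (hU : ∀ n : ℕ, IsPerturbedSGSub μ p F TVr (U n) (fun ω => -(trunc V n ω)))
    (n : ℕ) (f : Lp ℝ p μ) (f' : F) (hf' : (f' : Lp ℝ p μ) = P f) {t : ℝ} (ht : 0 < t) :
    ∃ Q : ℕ → Lp ℝ p μ,
      (∀ N, Tendsto (fun k => pic (S k) (Mul μ p (trunc V n)) f N t) atTop (𝓝 (Q N))) ∧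
      Tendsto Q atTop (𝓝 ((U n t f' : F) : Lp ℝ p μ)) := by
  have hG := fun n => good_trunc (p := p) hp hV n
  have hbd := pg_bdd hT hTpos hS hG (trunc_nonneg V)
  have hPP : ∀ g, P (P g) = P g := fun g => by
    have := congrArg (fun A => A g) hPband.1
    simpa using this
  have hmem : ∀ g, g ∈ F ↔ P g = g := by
    intro g
    rw [← SetLike.mem_coe, hF]
    constructor
    · rintro ⟨y, rfl⟩; exact hPP y
    · intro h; exact ⟨g, h⟩
  have hFc : IsClosed (F : Set (Lp ℝ p μ)) := by
    have : (F : Set (Lp ℝ p μ)) = {g | P g = g} := by ext g; exact hmem g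
    rw [this]
    exact isClosed_eq P.continuous continuous_id
  haveI : CompleteSpace F := hFc.completeSpace_coe
  have hTVs : ∀ s r, 0 ≤ s → 0 ≤ r → ∀ g, TV (s + r) g = TV s (TV r g) := by
    intro s r hs hr g
    obtain ⟨M, hM0, hM⟩ := hbd s
    refine tendsto_nhds_unique (hTV _ (add_nonneg hs hr) g) ?_
    have h1 := tendsto_app (A := fun k => S k s) (fun k => by
      have := hM k s le_rfl
      rwa [ex_of_nonneg _ hs] at this) (hTV r hr g) (hTV s hs _)
    refine h1.congr fun k => ?_
    rw [(hS k).1.1.2 s r hs hr]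
    rfl
  have hTVz : ∀ t, 0 < t → ∀ x, P x = 0 → TV t x = 0 := by
    intro t ht x hx
    obtain ⟨M, hM0, hM⟩ := hbd t
    have h1 : ∀ s, 0 ≤ s → s ≤ t → ∀ y, ‖TV s y‖ ≤ M * ‖y‖ := by
      intro s hs hst y
      refine le_of_tendsto' (hTV s hs y).norm fun k => ?_
      have := hM k s hst
      rw [ex_of_nonneg _ hs] at this
      exact (ContinuousLinearMap.le_opNorm _ _).trans
        (mul_le_mul_of_nonneg_right this (norm_nonneg _))
    have h2 : Tendsto (fun r => M * ‖TV r x‖) (𝓝[>] 0) (𝓝 0) := by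
      have := (hP x).norm.const_mul M
      simpa [hx] using this
    have h3 : ‖TV t x‖ ≤ 0 := by
      refine ge_of_tendsto h2 ?_
      filter_upwards [Ioo_mem_nhdsGT ht] with r hr
      have e := hTVs (t - r) r (by linarith [hr.2]) hr.1.le x
      rw [sub_add_cancel] at e
      rw [e]
      exact h1 _ (by linarith [hr.2]) (by linarith [hr.1]) _
    exact norm_le_zero_iff.1 h3
  have hTVP : ∀ t, 0 < t → TV t (P f) = TV t f := by
    intro t ht
    have := hTVz t ht (P f - f) (by rw [map_sub, hPP, sub_self])
    rwa [map_sub, sub_eq_zero] at this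
  set B := Mul μ p (trunc V n) with hB
  have hBpos : Pos B := Mul_pos (hG n) (trunc_nonneg V n)
  have hBle : ∀ g, 0 ≤ g → B g ≤ (n : ℝ) • g := by
    intro g hg
    rw [← Lp.coeFn_nonneg] at hg
    rw [← Lp.coeFn_le]
    filter_upwards [hg, Mul_coe (hG n) g, Lp.coeFn_smul (n : ℝ) g] with ω a b c
    rw [b, c]
    exact mul_le_mul_of_nonneg_right (trunc_le V n ω) a
  have hBP : ∀ g, 0 ≤ g → P (B (P g)) = B (P g) := by
    intro g hg
    have q0 := (hPband.2 g hg).1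
    have q1 := hBpos _ q0
    have q2 := hBle _ q0
    have q3 := (hPband.2 _ q1).2
    have q4 := (hPband.2 _ (sub_nonneg.2 q2)).2
    rw [map_sub, map_smul, hPP] at q4
    refine le_antisymm q3 ?_
    have q5 := sub_le_sub_left q4 ((n : ℝ) • P g)
    simpa using q5
  have hBF : ∀ x : F, B x ∈ F := by
    intro x
    have hx : P x = x := (hmem _).1 x.2
    have e : (x : Lp ℝ p μ) = P (x : Lp ℝ p μ)⁺ - P (x : Lp ℝ p μ)⁻ := by
      rw [← map_sub, posPart_sub_negPart, hx]
    rw [hmem, e, map_sub, map_sub, hBP _ (posPart_nonneg _), hBP _ (negPart_nonneg _)]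
  let BF : F →L[ℝ] F := (B.comp F.subtypeL).codRestrict F hBF
  have hBFc : ∀ x : F, ((BF x : F) : Lp ℝ p μ) = B x := fun x => rfl
  have hpert : Pert TVr BF (U n) := by
    refine ⟨hTVrC0, (hU n).1, fun x g hg => ?_⟩
    obtain ⟨g₀, h0, e⟩ := ((hU n).2 x g).1 hg
    have : g - BF x = g₀ := by
      apply Subtype.ext
      apply Lp.ext
      rw [Submodule.coe_sub, hBFc]
      filter_upwards [e, Lp.coeFn_sub (g : Lp ℝ p μ) (B x), Mul_coe (hG n) (x : Lp ℝ p μ)]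
        with ω a b c
      rw [b, Pi.sub_apply, a, c]
      ring
    rwa [this]
  refine ⟨fun N => ((pic TVr BF f' N t : F) : Lp ℝ p μ), fun N => ?_, ?_⟩
  · refine pic_lim (fun k => (hS k).1) hbd F hTVrC0 hBFc ?_ ?_ N t ht
    · intro s hs
      rw [hTVr s hs.le, hf', hTVP s hs]
      exact hTV s hs.le f
    · intro s hs x
      rw [hTVr s hs.le]
      exact hTV s hs.le x
  · exact (continuous_subtype_val.tendsto _).comp (pic_tendsto hpert f' ht.le)

lemma trunc_ineq (V : Ω → ℝ≥0∞) {ε : ℝ} (h0 : 0 < ε) (h1 : ε ≤ 1) {n m k : ℕ} (hk : n + m ≤ k)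
    (ω : Ω) : trunc V n ω ≤ trunc V k ω - (trunc (smulRate ε V) m ω - ε * n) := by
  have hk' : (n : ℝ) + m ≤ k := by exact_mod_cast hk
  have hm0 : (0:ℝ) ≤ m := Nat.cast_nonneg m
  have hn0 : (0:ℝ) ≤ n := Nat.cast_nonneg n
  by_cases hv : V ω = ∞
  · have e1 : trunc V n ω = n := by simp [trunc, hv]
    have e2 : trunc V k ω = k := by simp [trunc, hv]
    have e3 := trunc_le (smulRate ε V) m ω
    rw [e1, e2]
    nlinarith
  · obtain ⟨v, hv'⟩ : ∃ v : NNReal, V ω = v := ⟨(V ω).toNNReal, (ENNReal.coe_toNNReal hv).symm⟩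
    have e : ∀ j : ℕ, trunc V j ω = min (v : ℝ) j := by
      intro j
      simp only [trunc, hv']
      rw [ENNReal.toReal_min (by simp) (by simp)]
      simp
    have e3 : trunc (smulRate ε V) m ω = min (ε * v) m := by
      simp only [trunc, smulRate, hv']
      rw [ENNReal.toReal_min (ENNReal.mul_ne_top (by simp) (by simp)) (by simp)]
      simp [h0.le]
    rw [e, e, e3]
    have i1 := min_le_left (ε * v) (m : ℝ)
    have i2 := min_le_right (ε * v) (m : ℝ)
    have i3 := min_le_left (v : ℝ) (n : ℝ)
    have i4 := min_le_right (v : ℝ) (n : ℝ)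
    rcases le_total (v : ℝ) k with h | h
    · rw [min_eq_left h]
      rcases le_total (v : ℝ) n with h2 | h2
      · nlinarith
      · nlinarith
    · rw [min_eq_right h]
      nlinarith

lemma stepa (hp : p ≠ ∞) (hT : IsC0Semigroup T) (hTpos : IsPositiveSG T)
    {V : Ω → ℝ≥0∞} (hV : LocallyMeasurable μ V)
    {S : ℕ → ℝ → Lp ℝ p μ →L[ℝ] Lp ℝ p μ}
    (hS : ∀ n : ℕ, IsPerturbedSG μ p T (S n) (trunc V n))
    {ε : ℝ} (h0 : 0 < ε) (h1 : ε ≤ 1) {R : ℕ → ℝ → Lp ℝ p μ →L[ℝ] Lp ℝ p μ}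
    (hR : ∀ m : ℕ, IsPerturbedSG μ p T (R m) (trunc (smulRate ε V) m))
    {n : ℕ} {f : Lp ℝ p μ} (hf : 0 ≤ f) {t : ℝ} (ht : 0 < t) {y u : Lp ℝ p μ}
    (hy : Tendsto (fun m => R m t f) atTop (𝓝 y)) {Q : ℕ → Lp ℝ p μ}
    (hQ : ∀ N, Tendsto (fun k => pic (S k) (Mul μ p (trunc V n)) f N t) atTop (𝓝 (Q N)))
    (hu : Tendsto Q atTop (𝓝 u)) : u ≤ Real.exp (ε * n * t) • y := by
  have hG := fun n => good_trunc (p := p) hp hV n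
  have hG' := fun m => good_trunc (p := p) hp (locmeas_smul hV ε) m
  refine ge_of_tendsto' (hy.const_smul (Real.exp (ε * n * t))) fun m => ?_
  refine le_of_tendsto' hu fun N => ?_
  refine le_of_tendsto (hQ N) ?_
  filter_upwards [eventually_ge_atTop (n + m)] with k hk
  have hg2 : Good μ p (fun ω => trunc (smulRate ε V) m ω - ε * n) := (hG' m).sub (Good.const _)
  have hP := pg_pert (hS k) (pg_resc (hR m) (ε * n)) (hG k) hg2
  have hpos := pg_pos hT hTpos (hS k) (hG k)
  have hBn : Pos (Mul μ p (trunc V n)) := Mul_pos (hG n) (trunc_nonneg V n)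
  have hineq := trunc_ineq V h0 h1 hk
  have a1 := pic_mono (hS k).1 hpos hBn
    (B' := Mul μ p (fun ω => trunc V k ω - (trunc (smulRate ε V) m ω - ε * n))) (by
      rw [Mul_sub ((hG k).sub hg2) (hG n)]
      exact Mul_pos (((hG k).sub hg2).sub (hG n)) fun ω => sub_nonneg.2 (hineq ω)) hf N t ht.le
  have a2 := pic_le hP hpos (Mul_pos ((hG k).sub hg2) fun ω =>
    (trunc_nonneg V n ω).trans (hineq ω)) hf N t ht.le
  exact a1.trans a2

lemma trunc_scale (V : Ω → ℝ≥0∞) {q : ℕ} (hq : 0 < q) (m : ℕ) :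
    trunc (smulRate (q : ℝ)⁻¹ V) m = fun ω => (q : ℝ)⁻¹ * trunc V (q * m) ω := by
  funext ω
  have hq' : (0:ℝ) < q := by exact_mod_cast hq
  by_cases hv : V ω = ∞
  · have : ENNReal.ofReal (q : ℝ)⁻¹ * ∞ = ∞ := ENNReal.mul_top (by simpa using hq.ne')
    simp only [trunc, smulRate, hv, this]
    simp
    field_simp
  · obtain ⟨v, hv'⟩ : ∃ v : NNReal, V ω = v := ⟨(V ω).toNNReal, (ENNReal.coe_toNNReal hv).symm⟩
    simp only [trunc, smulRate, hv']
    rw [ENNReal.toReal_min (ENNReal.mul_ne_top (by simp) (by simp)) (by simp),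
      ENNReal.toReal_min (by simp) (ENNReal.natCast_ne_top _)]
    have : (0:ℝ) ≤ (q:ℝ)⁻¹ := by positivity
    rw [mul_min_of_nonneg _ _ this, ENNReal.toReal_mul, ENNReal.toReal_ofReal this]
    congr 1
    simp
    field_simp

lemma stepb (hp : p ≠ ∞) (hT : IsC0Semigroup T) (hTpos : IsPositiveSG T)
    {V : Ω → ℝ≥0∞} (hV : LocallyMeasurable μ V)
    {S : ℕ → ℝ → Lp ℝ p μ →L[ℝ] Lp ℝ p μ}
    (hS : ∀ n : ℕ, IsPerturbedSG μ p T (S n) (trunc V n))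
    {q : ℕ} (hq : 0 < q) {R : ℕ → ℝ → Lp ℝ p μ →L[ℝ] Lp ℝ p μ}
    (hR : ∀ m : ℕ, IsPerturbedSG μ p T (R m) (trunc (smulRate (q : ℝ)⁻¹ V) m))
    {f : Lp ℝ p μ} (hf : 0 ≤ f) {t : ℝ} (ht : 0 < t) {y L : Lp ℝ p μ}
    (hy : Tendsto (fun m => R m t f) atTop (𝓝 y)) {u : ℕ → Lp ℝ p μ}
    (hu : ∀ n, ∃ Q : ℕ → Lp ℝ p μ,
      (∀ N, Tendsto (fun k => pic (S k) (Mul μ p (trunc V n)) f N t) atTop (𝓝 (Q N))) ∧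
      Tendsto Q atTop (𝓝 (u n)))
    (hL : Tendsto u atTop (𝓝 L)) : y ≤ L := by
  have hG := fun n => good_trunc (p := p) hp hV n
  have hbd := pg_bdd hT hTpos hS hG (trunc_nonneg V)
  have hq' : (1:ℝ) ≤ q := by exact_mod_cast hq
  set ε : ℝ := (q : ℝ)⁻¹ with hε
  have e0 : 0 < ε := by positivity
  have e1 : ε ≤ 1 := inv_le_one_of_one_le₀ hq'
  have hpos := fun k => pg_pos hT hTpos (hS k) (hG k)
  have hBp : ∀ n, Pos (Mul μ p (trunc V n)) := fun n => Mul_pos (hG n) (trunc_nonneg V n)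
  have hqt : Tendsto (fun m => q * m) atTop atTop :=
    tendsto_id.const_mul_atTop' hq
  have tm : ∀ {n k : ℕ}, n ≤ k → ∀ ω, trunc V n ω ≤ trunc V k ω := by
    intro n k h ω
    refine ENNReal.toReal_mono (by simp) ?_
    exact min_le_min le_rfl (by exact_mod_cast h)
  obtain ⟨M, hM0, hM⟩ := hbd t
  obtain ⟨M', hM0', hM'⟩ := ex_bdd hT t
  -- main estimate with the first limit carried out
  have key : ∀ m', y ≤ ε • u (q * m') + (1 - ε) • R m' t f := by
    intro m'
    set n := q * m' with hn
    obtain ⟨Q, hQ1, hQ2⟩ := hu n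
    have hK : ∀ k, n ≤ k → ∀ i s, 0 ≤ s → s ≤ t →
        ‖pic (S k) (Mul μ p (trunc V n)) f i s‖ ≤ M' * ‖f‖ := by
      intro k hk i s hs hst
      have b0 := pic_nonneg (hS k).1 (hpos k) (hBp n) hf i s hs
      have b1 := pic_mono (hS k).1 (hpos k) (hBp n) (B' := Mul μ p (fun ω => trunc V k ω - 0)) (by
        rw [Mul_sub ((hG k).sub (Good.const 0)) (hG n)]
        exact Mul_pos (((hG k).sub (Good.const 0)).sub (hG n)) fun ω => by
          have := tm hk ω
          linarith) hf i s hs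
      have b2 := pic_le (pg_pert (hS k) (pg_self hT) (hG k) (Good.const 0)) (hpos k)
        (Mul_pos ((hG k).sub (Good.const 0)) fun ω => by
          have := trunc_nonneg V k ω
          linarith) hf i s hs
      refine (norm_le_of b0 (b1.trans b2)).trans ?_
      have := hM' s hst
      rw [ex_of_nonneg _ hs] at this
      exact (ContinuousLinearMap.le_opNorm _ _).trans
        (mul_le_mul_of_nonneg_right this (norm_nonneg _))
    obtain ⟨G, hG1, hG2⟩ := interchange
      (P := fun k N => pic (S k) (Mul μ p (trunc V n)) f N t)
      (err_tendsto (M' * ‖f‖) (M * ‖Mul μ p (trunc V n)‖ * t)) (by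
        filter_upwards [eventually_ge_atTop n] with k hk N i
        exact pic_tail (hS k).1 _ f ht.le hM0 (fun s hs => hM k s hs) (hK k hk) N i) hQ1 hQ2
    have lim : Tendsto (fun m => ε • G (q * m) + (1 - ε) • R m' t f) atTop
        (𝓝 (ε • u n + (1 - ε) • R m' t f)) :=
      ((hG2.comp hqt).const_smul ε).add_const _
    refine le_of_tendsto_of_tendsto hy lim ?_
    filter_upwards [eventually_ge_atTop m', hqt.eventually hG1] with m hm hGm
    set k := q * m with hk
    have hnk : n ≤ k := Nat.mul_le_mul_left q hm
    have hRm := hR m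
    have hRm' := hR m'
    rw [trunc_scale V hq] at hRm hRm'
    have gθ : Good μ p (fun ω => trunc V k ω - ε * trunc V k ω) := (hG k).sub ((hG k).smul ε)
    have g1 : Good μ p (fun ω => trunc V k ω - ε * trunc V n ω) := (hG k).sub ((hG n).smul ε)
    have g0 : Good μ p (fun ω => trunc V n ω - ε * trunc V n ω) := (hG n).sub ((hG n).smul ε)
    have pθ := pg_pert (hS k) hRm (hG k) ((hG k).smul ε)
    have p1 := pg_pert (hS k) hRm' (hG k) ((hG n).smul ε)
    have z : ∀ j ω, 0 ≤ trunc V j ω - ε * trunc V j ω := fun j ω => by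
      have := trunc_nonneg V j ω
      nlinarith
    have posθ := Mul_pos gθ (z k)
    have pos0 := Mul_pos g0 (z n)
    have pos1 := Mul_pos g1 fun ω => by
      have := tm hnk ω
      have := z n ω
      linarith
    refine le_of_tendsto_of_tendsto' (pic_tendsto pθ f ht.le)
      ((hGm.const_smul ε).add_const _) fun N => ?_
    have c1 := pic_conv (hS k).1 (hpos k) (θ := 1 - ε) (by linarith) (by linarith) pos0 posθ
      (B₁ := Mul μ p (fun ω => trunc V k ω - ε * trunc V n ω)) (by
        rw [Mul_sub g1 g0]
        exact Mul_pos (g1.sub g0) fun ω => by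
          have := tm hnk ω
          linarith) (by
        rw [Mul_smul g0, Mul_smul g1, Mul_add (g0.smul _) (g1.smul _),
          Mul_sub ((g0.smul _).add (g1.smul _)) gθ]
        exact Mul_pos (((g0.smul _).add (g1.smul _)).sub gθ) fun ω => by
          apply le_of_eq
          ring) hf N t ht.le
    have c2 := pic_mono (hS k).1 (hpos k) pos0 (B' := Mul μ p (trunc V n)) (by
      rw [Mul_sub (hG n) g0]
      exact Mul_pos ((hG n).sub g0) fun ω => by
        have := mul_nonneg e0.le (trunc_nonneg V n ω)
        linarith) hf N t ht.le
    have c3 := pic_le p1 (hpos k) pos1 hf N t ht.le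
    refine c1.trans (add_le_add ?_ ?_)
    · rw [show (1:ℝ) - (1 - ε) = ε by ring]
      exact smul_le_smul_of_nonneg_left c2 e0.le
    · exact smul_le_smul_of_nonneg_left c3 (by linarith)
  have lim2 : Tendsto (fun m' => ε • u (q * m') + (1 - ε) • R m' t f) atTop
      (𝓝 (ε • L + (1 - ε) • y)) :=
    ((hL.comp hqt).const_smul ε).add (hy.const_smul _)
  have h2 : y ≤ ε • L + (1 - ε) • y := ge_of_tendsto' lim2 key
  have h3 : ε • y ≤ ε • L := by
    have := sub_le_sub_right h2 ((1 - ε) • y)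
    rw [add_sub_cancel_right] at this
    refine le_trans (le_of_eq ?_) this
    module
  have h4 := smul_le_smul_of_nonneg_left h3 (inv_nonneg.2 e0.le)
  rwa [smul_smul, smul_smul, inv_mul_cancel₀ e0.ne', one_smul, one_smul] at h4

lemma smulRate_trunc_mono (V : Ω → ℝ≥0∞) {a b : ℝ} (h : a ≤ b) (m : ℕ) (ω : Ω) :
    trunc (smulRate a V) m ω ≤ trunc (smulRate b V) m ω := by
  refine ENNReal.toReal_mono (by simp) (min_le_min ?_ le_rfl)
  exact mul_le_mul' (ENNReal.ofReal_le_ofReal h) le_rfl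

end Main

end AbsPf

/-- For locally measurable `V : Ω → [0,∞]` (not assumed `T`-admissible),
`(T_V)_{−V}(t) = s-lim_{ε→0+} T_{εV}(t)` for every `t > 0`, where `(T_V)_{−V}(t)` denotes the
extension `J (T_V)_{−V}(t) P` to `L_p(μ)`. -/
theorem statement14
    {Ω : Type*} [MeasurableSpace Ω] (μ : Measure Ω) (p : ℝ≥0∞) [Fact (1 ≤ p)] (hp : p ≠ ∞)
    (T : ℝ → Lp ℝ p μ →L[ℝ] Lp ℝ p μ)
    (hT : IsC0Semigroup T) (hTpos : IsPositiveSG T)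
    (V : Ω → ℝ≥0∞) (hVmeas : LocallyMeasurable μ V)
    -- the one-parameter semigroup `T_V = s-lim_{n→∞} e^{t(A − V∧n)}`
    (S : ℕ → ℝ → Lp ℝ p μ →L[ℝ] Lp ℝ p μ)
    (hS : ∀ n : ℕ, IsPerturbedSG μ p T (S n) (trunc V n))
    (TV : ℝ → Lp ℝ p μ →L[ℝ] Lp ℝ p μ)
    (hTV : ∀ t : ℝ, 0 ≤ t → ∀ f : Lp ℝ p μ,
      Tendsto (fun n : ℕ => S n t f) atTop (𝓝 (TV t f)))
    -- the band projection `P = s-lim_{t→0+} T_V(t)`, with range the band `F` (`= L_p(μ₁)`)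
    (P : Lp ℝ p μ →L[ℝ] Lp ℝ p μ)
    (hP : ∀ f : Lp ℝ p μ, Tendsto (fun t : ℝ => TV t f) (𝓝[>] (0 : ℝ)) (𝓝 (P f)))
    (hPband : IsBandProjection P)
    (F : Submodule ℝ (Lp ℝ p μ)) (hF : (F : Set (Lp ℝ p μ)) = Set.range P)
    -- the restriction `T_V|_F`, a `C₀`-semigroup
    (TVr : ℝ → F →L[ℝ] F)
    (hTVr : ∀ t : ℝ, 0 ≤ t → ∀ f : F, ((TVr t f : F) : Lp ℝ p μ) = TV t (f : Lp ℝ p μ))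
    (hTVrC0 : IsC0Semigroup TVr)
    -- `(T_V)_{−V}`, the `C₀`-semigroup obtained from `T_V|_F` by the perturbation `−V`
    (U : ℕ → ℝ → F →L[ℝ] F)
    (hU : ∀ n : ℕ, IsPerturbedSGSub μ p F TVr (U n) (fun ω => -(trunc V n ω)))
    (LV : ℝ → F →L[ℝ] F)
    (hLV : ∀ t : ℝ, 0 ≤ t → ∀ f : F, Tendsto (fun n : ℕ => U n t f) atTop (𝓝 (LV t f)))
    (hLVC0 : IsC0Semigroup LV)
    -- the extension `J (T_V)_{−V}(t) P` of `(T_V)_{−V}(t)` to `L_p(μ)`, for `t > 0`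
    (Lext : ℝ → Lp ℝ p μ →L[ℝ] Lp ℝ p μ)
    (hLext₁ : ∀ t : ℝ, 0 < t → ∀ f : F, Lext t (f : Lp ℝ p μ) = ((LV t f : F) : Lp ℝ p μ))
    (hLext₂ : ∀ t : ℝ, 0 < t → ∀ f : Lp ℝ p μ, Lext t f = Lext t (P f))
    -- the absorption semigroups `T_{εV}` for `ε > 0`
    (Sε : ℝ → ℝ → Lp ℝ p μ →L[ℝ] Lp ℝ p μ)
    (hSε : ∀ ε : ℝ, 0 < ε → IsAbsorptionSG μ p T (smulRate ε V) (Sε ε)) :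
    -- `(T_V)_{−V}(t) = s-lim_{ε→0+} T_{εV}(t)` for every `t > 0`
    ∀ t : ℝ, 0 < t → ∀ f : Lp ℝ p μ,
      Tendsto (fun ε : ℝ => Sε ε t f) (𝓝[>] (0 : ℝ)) (𝓝 (Lext t f)) := by
  have hPP : ∀ g, P (P g) = P g := fun g => by
    have := congrArg (fun A => A g) hPband.1
    simpa using this
  have hmem : ∀ g, P g ∈ F := by
    intro g
    rw [← SetLike.mem_coe, hF]
    exact ⟨g, rfl⟩
  intro t ht
  suffices H : ∀ f : Lp ℝ p μ, 0 ≤ f →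
      Tendsto (fun ε : ℝ => Sε ε t f) (𝓝[>] (0 : ℝ)) (𝓝 (Lext t f)) by
    intro f
    have := (H f⁺ (posPart_nonneg f)).sub (H f⁻ (negPart_nonneg f))
    simp only [← map_sub, posPart_sub_negPart] at this
    exact this
  intro f hf
  set f' : F := ⟨P f, hmem f⟩ with hf'
  have hLe : Lext t f = ((LV t f' : F) : Lp ℝ p μ) := by
    rw [hLext₂ t ht f, ← hLext₁ t ht f']
  rw [hLe]
  have hA := fun n => AbsPf.stepA hp hT hTpos hVmeas hS hTV hP hPband hF hTVr hTVrC0 hU n f f' rfl ht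
  have hL : Tendsto (fun n => ((U n t f' : F) : Lp ℝ p μ)) atTop
      (𝓝 ((LV t f' : F) : Lp ℝ p μ)) :=
    (continuous_subtype_val.tendsto _).comp (hLV t ht.le f')
  generalize ((LV t f' : F) : Lp ℝ p μ) = L at hL ⊢
  have upper : ∀ ε : ℝ, 0 < ε → Sε ε t f ≤ L := by
    intro ε h0
    obtain ⟨q, hq⟩ := exists_nat_gt ε⁻¹
    have hq0 : (0:ℝ) < q := (inv_pos.2 h0).trans hq
    have hqn : 0 < q := by exact_mod_cast hq0
    have hqe : (q : ℝ)⁻¹ ≤ ε := inv_le_of_inv_le₀ h0 hq.le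
    obtain ⟨R, hR, hRl⟩ := hSε ε h0
    obtain ⟨R', hR', hRl'⟩ := hSε (q : ℝ)⁻¹ (inv_pos.2 hq0)
    refine le_trans ?_ (AbsPf.stepb hp hT hTpos hVmeas hS hqn hR' hf ht (hRl' t ht.le f) hA hL)
    refine le_of_tendsto_of_tendsto' (hRl t ht.le f) (hRl' t ht.le f) fun m => ?_
    exact AbsPf.pg_mono hT hTpos (hR m) (hR' m)
      (AbsPf.good_trunc hp (AbsPf.locmeas_smul hVmeas _) m)
      (AbsPf.good_trunc hp (AbsPf.locmeas_smul hVmeas _) m)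
      (AbsPf.smulRate_trunc_mono V hqe m) hf ht.le
  have lower : ∀ n : ℕ, ∀ ε : ℝ, 0 < ε → ε ≤ 1 →
      Real.exp (-(ε * n * t)) • ((U n t f' : F) : Lp ℝ p μ) ≤ Sε ε t f := by
    intro n ε h0 h1
    obtain ⟨R, hR, hRl⟩ := hSε ε h0
    obtain ⟨Q, hQ1, hQ2⟩ := hA n
    have h := AbsPf.stepa hp hT hTpos hVmeas hS h0 h1 hR hf ht (hRl t ht.le f) hQ1 hQ2
    have h2 := smul_le_smul_of_nonneg_left h (Real.exp_pos (-(ε * n * t))).le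
    rw [smul_smul, ← Real.exp_add, neg_add_cancel, Real.exp_zero, one_smul] at h2
    exact h2
  rw [Metric.tendsto_nhds]
  intro η hη
  obtain ⟨n, hn⟩ := (Metric.tendsto_nhds.1 hL η hη).exists
  have hc : Tendsto (fun ε : ℝ => ‖L - Real.exp (-(ε * n * t)) • ((U n t f' : F) : Lp ℝ p μ)‖)
      (𝓝[>] 0) (𝓝 ‖L - ((U n t f' : F) : Lp ℝ p μ)‖) := by
    have c1 : Continuous fun ε : ℝ =>
        ‖L - Real.exp (-(ε * n * t)) • ((U n t f' : F) : Lp ℝ p μ)‖ := by fun_prop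
    have c2 := c1.tendsto 0
    simp only [zero_mul, neg_zero, Real.exp_zero, one_smul] at c2
    exact c2.mono_left nhdsWithin_le_nhds
  rw [dist_comm, dist_eq_norm] at hn
  filter_upwards [hc.eventually_lt_const hn, Ioc_mem_nhdsGT (zero_lt_one' ℝ)] with ε h1 h2
  rw [dist_comm, dist_eq_norm]
  refine lt_of_le_of_lt ?_ h1
  exact AbsPf.norm_le_of (sub_nonneg.2 (upper ε h2.1))
    (sub_le_sub_left (lower n ε h2.1 h2.2) L)
end
end

section
/- Let (Ω, 𝒜, μ) be a measure space, p ∈ [1,∞), T a positive C₀-semigroup on L_p(μ) with generator A, and V : Ω → [0,∞] locally measurable. Then for every ε ∈ (0,1], the strong limit s-lim_{t→0+} T_{εV}(t) exists and equals the band projection P = s-lim_{t→0+} T_V(t). -/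
open MeasureTheory Filter Topology ENNReal

noncomputable section

open Absorption

namespace AbsProof

section abstract_part

set_option linter.unusedSectionVars false

variable {E : Type*} [NormedAddCommGroup E] [NormedSpace ℝ E] [CompleteSpace E]

lemma bdd {T : ℝ → E →L[ℝ] E} (hT : IsC0Semigroup T) (a : ℝ) :
    ∃ M : ℝ, 0 ≤ M ∧ ∀ t, 0 ≤ t → t ≤ a → ‖T t‖ ≤ M := by
  have h := banach_steinhaus (ι := Set.Icc (0:ℝ) a) (g := fun i => T i.1) (by
    intro x
    have hc : ContinuousOn (fun t => T t x) (Set.Icc 0 a) :=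
      (hT.2 x).mono Set.Icc_subset_Ici_self
    obtain ⟨C, hC⟩ := isCompact_Icc.exists_bound_of_continuousOn hc
    exact ⟨C, fun i => hC i.1 i.2⟩)
  obtain ⟨C, hC⟩ := h
  exact ⟨max C 0, le_max_right _ _, fun t h0 h1 => (hC ⟨t, h0, h1⟩).trans (le_max_left _ _)⟩

lemma cont1 {T : ℝ → E →L[ℝ] E} (hT : IsC0Semigroup T) (f : E) :
    Continuous fun t : ℝ => T |t| f :=
  (hT.2 f).comp_continuous continuous_abs (fun t => abs_nonneg t)

lemma cont2 {T : ℝ → E →L[ℝ] E} (hT : IsC0Semigroup T) :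
    Continuous fun q : ℝ × E => T |q.1| q.2 := by
  rw [continuous_iff_continuousAt]
  rintro ⟨t, x⟩
  obtain ⟨M, hM0, hM⟩ := bdd hT (|t| + 1)
  have h1 : Tendsto (fun q : ℝ × E => M * ‖q.2 - x‖ + ‖T |q.1| x - T |t| x‖) (𝓝 (t, x)) (𝓝 0) := by
    have c : Continuous (fun q : ℝ × E => M * ‖q.2 - x‖ + ‖T |q.1| x - T |t| x‖) := by
      have h1 : Continuous fun q : ℝ × E => T |q.1| x := (cont1 hT x).comp continuous_fst
      exact (continuous_const.mul (continuous_snd.sub continuous_const).norm).add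
        (h1.sub continuous_const).norm
    have := c.tendsto (t, x)
    simpa using this
  have h2 : ∀ᶠ q : ℝ × E in 𝓝 (t, x), |q.1| ≤ |t| + 1 := by
    have c : Continuous (fun q : ℝ × E => |q.1|) := by fun_prop
    have := c.tendsto (t, x)
    filter_upwards [this.eventually (gt_mem_nhds (show |t| < |t| + 1 by linarith))] with q hq
    exact hq.le
  rw [ContinuousAt, tendsto_iff_norm_sub_tendsto_zero]
  refine squeeze_zero' (Eventually.of_forall fun _ => norm_nonneg _) ?_ h1
  filter_upwards [h2] with q hq
  have e : T |q.1| q.2 - T |t| x = T |q.1| (q.2 - x) + (T |q.1| x - T |t| x) := by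
    rw [map_sub]; abel
  show ‖T |q.1| q.2 - T |t| x‖ ≤ _
  rw [e]
  refine (norm_add_le _ _).trans (add_le_add_left ?_ _)
  exact ((T |q.1|).le_opNorm _).trans
    (mul_le_mul_of_nonneg_right (hM _ (abs_nonneg _) hq) (norm_nonneg _))

lemma gen_inv {T : ℝ → E →L[ℝ] E} (hT : IsC0Semigroup T) {f g : E} {s : ℝ} (hs : 0 ≤ s)
    (h : InGenerator T f g) : InGenerator T (T s f) (T s g) := by
  have := ((T s).continuous.tendsto g).comp h
  refine this.congr' ?_
  filter_upwards [self_mem_nhdsWithin] with t ht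
  have ht : 0 ≤ t := le_of_lt ht
  simp only [Function.comp]
  rw [map_smul, map_sub, ← ContinuousLinearMap.comp_apply, ← hT.1.2 s t hs ht,
    ← ContinuousLinearMap.comp_apply, ← hT.1.2 t s ht hs, add_comm]

lemma dom_int {T : ℝ → E →L[ℝ] E} (hT : IsC0Semigroup T) (f : E) {h : ℝ} (hh : 0 < h) :
    InGenerator T (∫ s in (0:ℝ)..h, T |s| f) (T h f - f) := by
  have hc := cont1 hT f
  set G : ℝ → E := fun x => ∫ s in (0:ℝ)..x, T |s| f with hG
  have hd : ∀ x, HasDerivAt G (T |x| f) x := fun x =>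
    intervalIntegral.integral_hasDerivAt_right (hc.intervalIntegrable _ _)
      (hc.stronglyMeasurableAtFilter _ _) hc.continuousAt
  have h1 : Tendsto (fun t : ℝ => t⁻¹ • (G (h + t) - G h)) (𝓝[>] 0) (𝓝 (T |h| f)) :=
    (hasDerivAt_iff_tendsto_slope_zero.1 (hd h)).mono_left
      (nhdsWithin_mono _ (fun x hx => ne_of_gt hx))
  have h2 : Tendsto (fun t : ℝ => t⁻¹ • (G (0 + t) - G 0)) (𝓝[>] 0) (𝓝 (T |0| f)) :=
    (hasDerivAt_iff_tendsto_slope_zero.1 (hd 0)).mono_left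
      (nhdsWithin_mono _ (fun x hx => ne_of_gt hx))
  have h3 := h1.sub h2
  rw [abs_of_pos hh, abs_zero, hT.1.1] at h3
  refine h3.congr' ?_
  filter_upwards [self_mem_nhdsWithin] with t ht
  have ht : 0 < t := ht
  have e : T t (∫ s in (0:ℝ)..h, T |s| f) = G (h + t) - G t := by
    rw [← ContinuousLinearMap.intervalIntegral_comp_comm _ (hc.intervalIntegrable _ _)]
    have : ∫ s in (0:ℝ)..h, T t (T |s| f) = ∫ s in (0:ℝ)..h, T |s + t| f := by
      apply intervalIntegral.integral_congr
      intro s hs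
      rw [Set.uIcc_of_le hh.le] at hs
      show T t (T |s| f) = T |s + t| f
      rw [← ContinuousLinearMap.comp_apply, ← hT.1.2 t |s| ht.le (abs_nonneg _),
        abs_of_nonneg hs.1, abs_of_nonneg (add_nonneg hs.1 ht.le), add_comm]
    rw [this, intervalIntegral.integral_comp_add_right (fun s => T |s| f), zero_add,
      eq_sub_iff_add_eq']
    exact intervalIntegral.integral_add_adjacent_intervals (hc.intervalIntegrable _ _)
      (hc.intervalIntegrable _ _)
  rw [e, ← smul_sub]
  have : G 0 = 0 := by simp [hG]
  rw [this, zero_add, sub_zero]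
  congr 1
  show _ = G (h + t) - G t - G h
  abel

lemma dense_dom {T : ℝ → E →L[ℝ] E} (hT : IsC0Semigroup T) (f : E) :
    ∃ u : ℕ → E, (∀ n, ∃ g, InGenerator T (u n) g) ∧ Tendsto u atTop (𝓝 f) := by
  have hc := cont1 hT f
  set G : ℝ → E := fun x => ∫ s in (0:ℝ)..x, T |s| f with hG
  have hd : HasDerivAt G (T |0| f) 0 :=
    intervalIntegral.integral_hasDerivAt_right (hc.intervalIntegrable _ _)
      (hc.stronglyMeasurableAtFilter _ _) hc.continuousAt
  have h2 : Tendsto (fun t : ℝ => t⁻¹ • (G (0 + t) - G 0)) (𝓝[>] 0) (𝓝 (T |0| f)) :=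
    (hasDerivAt_iff_tendsto_slope_zero.1 hd).mono_left
      (nhdsWithin_mono _ (fun x hx => ne_of_gt hx))
  have hu : Tendsto (fun n : ℕ => 1 / ((n:ℝ) + 1)) atTop (𝓝[>] 0) :=
    tendsto_nhdsWithin_iff.2 ⟨tendsto_one_div_add_atTop_nhds_zero_nat,
      Eventually.of_forall fun n => Set.mem_Ioi.2 Nat.one_div_pos_of_nat⟩
  have h3 := h2.comp hu
  have : G 0 = 0 := by simp [hG]
  rw [abs_zero, hT.1.1] at h3
  simp only [zero_add, this, sub_zero] at h3
  refine ⟨_, fun n => ?_, h3⟩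
  have hn : (0:ℝ) < 1 / ((n:ℝ) + 1) := Nat.one_div_pos_of_nat
  refine ⟨(1 / ((n:ℝ) + 1))⁻¹ • (T (1 / ((n:ℝ) + 1)) f - f), ?_⟩
  have := (dom_int hT f hn).const_smul (1 / ((n:ℝ) + 1))⁻¹
  refine this.congr fun t => ?_
  simp only [Function.comp, map_smul, hG]
  rw [← smul_sub, smul_comm]

lemma duhamel_dom {R S : ℝ → E →L[ℝ] E} (hR : IsC0Semigroup R) (hS : IsC0Semigroup S)
    (B : E →L[ℝ] E)
    (hB : ∀ f k, InGenerator S f k → InGenerator R f (k - B f)) {t : ℝ} (ht : 0 ≤ t)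
    {f k : E} (hf : InGenerator S f k) :
    S t f = R t f + ∫ s in (0:ℝ)..t, R |t - s| (B (S |s| f)) := by
  have hcS := cont1 hS f
  have c1 : Continuous fun s : ℝ => R |t - s| (S |s| f) :=
    (cont2 hR).comp ((continuous_const.sub continuous_id).prodMk hcS)
  have c2 : Continuous fun s : ℝ => R |t - s| (B (S |s| f)) :=
    (cont2 hR).comp ((continuous_const.sub continuous_id).prodMk (B.continuous.comp hcS))
  have key := intervalIntegral.integral_eq_sub_of_hasDeriv_right (a := 0) (b := t)
    (f := fun s : ℝ => R |t - s| (S |s| f)) (f' := fun s : ℝ => R |t - s| (B (S |s| f)))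
    c1.continuousOn ?_ (c2.intervalIntegrable _ _)
  · rw [key]
    simp only [sub_self, abs_zero, sub_zero, hR.1.1, hS.1.1, abs_of_nonneg ht]
    simp
  · intro s hs
    rw [min_eq_left ht, max_eq_right ht] at hs
    obtain ⟨hs0, hst⟩ := hs
    have g1 := gen_inv hS hs0.le hf
    have g2 := hB _ _ g1
    have g3 := Tendsto.sub g1 g2
    rw [_root_.sub_sub_cancel] at g3
    have g4 : Tendsto (fun h : ℝ => t - s - h) (𝓝[>] 0) (𝓝 (t - s)) := by
      have : Continuous (fun h : ℝ => t - s - h) := by fun_prop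
      have := this.tendsto 0
      rw [sub_zero] at this
      exact this.mono_left nhdsWithin_le_nhds
    have g5 := ((cont2 hR).tendsto (t - s, B (S s f))).comp (g4.prodMk_nhds g3)
    rw [hasDerivWithinAt_iff_tendsto_slope' (by simp)]
    have g6 : Tendsto (fun y : ℝ => y - s) (𝓝[>] s) (𝓝[>] 0) := by
      refine tendsto_nhdsWithin_iff.2 ⟨?_, ?_⟩
      · have : Continuous (fun y : ℝ => y - s) := by fun_prop
        have := this.tendsto s
        rw [sub_self] at this
        exact this.mono_left nhdsWithin_le_nhds
      · filter_upwards [self_mem_nhdsWithin] with y hy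
        exact Set.mem_Ioi.2 (sub_pos.2 (Set.mem_Ioi.1 hy))
    have g7 := g5.comp g6
    rw [abs_of_pos hs0]
    refine g7.congr' ?_
    filter_upwards [Ioo_mem_nhdsGT hst] with y hy
    obtain ⟨hy1, hy2⟩ := hy
    simp only [Function.comp, slope_def_module]
    have e0 : t - s - (y - s) = t - y := by ring
    rw [e0, ← smul_sub, map_smul]
    congr 1
    have e1 : S (y - s) (S s f) = S |y| f := by
      rw [← ContinuousLinearMap.comp_apply, ← hS.1.2 _ _ (by linarith) hs0.le, sub_add_cancel,
        abs_of_pos (by linarith)]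
    have e2 : R |t - y| (R (y - s) (S s f)) = R |t - s| (S |s| f) := by
      rw [← ContinuousLinearMap.comp_apply, ← hR.1.2 _ _ (abs_nonneg _) (by linarith),
        abs_of_pos hs0, abs_of_pos (by linarith), abs_of_pos (by linarith)]
      congr 2; ring
    rw [e1, map_sub, map_sub, map_sub, e2]
    abel

lemma duhamel {R S : ℝ → E →L[ℝ] E} (hR : IsC0Semigroup R) (hS : IsC0Semigroup S)
    (B : E →L[ℝ] E)
    (hB : ∀ f k, InGenerator S f k → InGenerator R f (k - B f)) {t : ℝ} (ht : 0 ≤ t)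
    (f : E) :
    S t f = R t f + ∫ s in (0:ℝ)..t, R |t - s| (B (S |s| f)) := by
  obtain ⟨u, hu, hlim⟩ := dense_dom hS f
  obtain ⟨M, hM0, hM⟩ := bdd hR t
  obtain ⟨N, hN0, hN⟩ := bdd hS t
  have hc : ∀ g : E, Continuous fun s : ℝ => R |t - s| (B (S |s| g)) := fun g => by
    have hcS := cont1 hS g
    exact (cont2 hR).comp ((continuous_const.sub continuous_id).prodMk (B.continuous.comp hcS))
  have h1 : Tendsto (fun n => S t (u n)) atTop (𝓝 (S t f)) := ((S t).continuous.tendsto f).comp hlim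
  have h2 : Tendsto (fun n => R t (u n)) atTop (𝓝 (R t f)) := ((R t).continuous.tendsto f).comp hlim
  have hb : ∃ C, ∀ n, ‖u n‖ ≤ C := by
    obtain ⟨C, hC⟩ := (Metric.isBounded_range_of_tendsto u hlim).exists_norm_le
    exact ⟨C, fun n => hC _ ⟨n, rfl⟩⟩
  obtain ⟨C, hC⟩ := hb
  have h3 : Tendsto (fun n => ∫ s in (0:ℝ)..t, R |t - s| (B (S |s| (u n)))) atTop
      (𝓝 (∫ s in (0:ℝ)..t, R |t - s| (B (S |s| f)))) := by
    apply intervalIntegral.tendsto_integral_filter_of_dominated_convergence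
      (fun _ => M * (‖B‖ * (N * C)))
    · exact Eventually.of_forall fun n => (hc _).aestronglyMeasurable
    · refine Eventually.of_forall fun n => Eventually.of_forall fun s hs => ?_
      rw [Set.uIoc_of_le ht] at hs
      have a1 : ‖S |s|‖ ≤ N := hN _ (abs_nonneg _) (by rw [abs_of_pos hs.1]; exact hs.2)
      have a2 : ‖R |t - s|‖ ≤ M := hM _ (abs_nonneg _) (by
        rw [abs_of_nonneg (by linarith [hs.2])]; linarith [hs.1])
      refine ((R |t - s|).le_opNorm _).trans (mul_le_mul a2 ?_ (norm_nonneg _) hM0)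
      refine (B.le_opNorm _).trans (mul_le_mul_of_nonneg_left ?_ (norm_nonneg _))
      exact ((S |s|).le_opNorm _).trans (mul_le_mul a1 (hC n) (norm_nonneg _) hN0)
    · exact intervalIntegrable_const
    · refine Eventually.of_forall fun s hs => ?_
      have : Continuous fun g => R |t - s| (B (S |s| g)) := by fun_prop
      exact (this.tendsto f).comp hlim
  refine tendsto_nhds_unique h1 ((h2.add h3).congr fun n => ?_)
  obtain ⟨g, hg⟩ := hu n
  exact (duhamel_dom hR hS B hB ht hg).symm

end abstract_part

section lattice_part

set_option linter.unusedSectionVars false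

variable {E : Type*} [NormedAddCommGroup E] [Lattice E] [HasSolidNorm E] [IsOrderedAddMonoid E]
  [NormedSpace ℝ E] [IsOrderedModule ℝ E] [CompleteSpace E]

lemma int_nonneg {F : ℝ → E} {t : ℝ} (ht : 0 ≤ t) (h : ∀ s, 0 < s → s ≤ t → 0 ≤ F s) :
    0 ≤ ∫ s in (0:ℝ)..t, F s := by
  rw [intervalIntegral.integral_of_le ht]
  apply integral_nonneg_of_ae
  exact ae_restrict_of_forall_mem measurableSet_Ioc fun s hs => h s hs.1 hs.2

lemma pos_mono {B : E →L[ℝ] E} (hB : ∀ f, 0 ≤ f → 0 ≤ B f) {f g : E} (h : f ≤ g) : B f ≤ B g := by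
  have := hB _ (sub_nonneg.2 h)
  rwa [map_sub, sub_nonneg] at this

lemma pos_pert {R S : ℝ → E →L[ℝ] E} (hR : IsC0Semigroup R) (hS : IsC0Semigroup S)
    (B : E →L[ℝ] E)
    (hB : ∀ f k, InGenerator S f k → InGenerator R f (k - B f))
    (hRp : ∀ t, 0 ≤ t → ∀ f, 0 ≤ f → 0 ≤ R t f) (hBp : ∀ f, 0 ≤ f → 0 ≤ B f) :
    ∀ t, 0 ≤ t → ∀ f, 0 ≤ f → 0 ≤ S t f := by
  obtain ⟨M, hM0, hM⟩ := bdd hR 1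
  obtain ⟨a, ha0, ha1, ha2⟩ : ∃ a : ℝ, 0 < a ∧ a ≤ 1 ∧ M * ‖B‖ * a ≤ 1 / 2 := by
    have hK : 0 ≤ M * ‖B‖ := by positivity
    refine ⟨min 1 (1 / (2 * (M * ‖B‖ + 1))), by positivity, min_le_left _ _, ?_⟩
    calc M * ‖B‖ * min 1 (1 / (2 * (M * ‖B‖ + 1)))
        ≤ M * ‖B‖ * (1 / (2 * (M * ‖B‖ + 1))) :=
          mul_le_mul_of_nonneg_left (min_le_right _ _) hK
      _ ≤ 1 / 2 := by
          rw [mul_one_div, div_le_div_iff₀ (by positivity) (by norm_num)]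
          linarith
  have small : ∀ t, 0 ≤ t → t ≤ a → ∀ f, 0 ≤ f → 0 ≤ S t f := by
    intro t ht hta f hf
    have hcS := cont1 hS f
    set n : ℝ → E := fun s => (-(S |s| f)) ⊔ 0 with hn
    have hnc : Continuous n := hcS.neg.sup continuous_const
    obtain ⟨s0, hs0, hmax⟩ := isCompact_Icc.exists_isMaxOn (Set.nonempty_Icc.2 ha0.le)
      (hnc.norm.continuousOn (s := Set.Icc 0 a))
    have c1 : Continuous fun s : ℝ => R |s0 - s| (B (S |s| f)) :=
      (cont2 hR).comp ((continuous_const.sub continuous_id).prodMk (B.continuous.comp hcS))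
    have c2 : Continuous fun s : ℝ => R |s0 - s| (B (n s)) :=
      (cont2 hR).comp ((continuous_const.sub continuous_id).prodMk (B.continuous.comp hnc))
    have d := duhamel hR hS B hB hs0.1 f
    have i1 : 0 ≤ ∫ s in (0:ℝ)..s0, R |s0 - s| (B (n s)) :=
      int_nonneg hs0.1 fun s _ _ => hRp _ (abs_nonneg _) _ (hBp _ le_sup_right)
    have i2 : 0 ≤ (∫ s in (0:ℝ)..s0, R |s0 - s| (B (S |s| f)))
        + ∫ s in (0:ℝ)..s0, R |s0 - s| (B (n s)) := by
      rw [← intervalIntegral.integral_add (c1.intervalIntegrable _ _) (c2.intervalIntegrable _ _)]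
      refine int_nonneg hs0.1 fun s _ _ => ?_
      rw [← map_add, ← map_add]
      refine hRp _ (abs_nonneg _) _ (hBp _ ?_)
      have : -(S |s| f) ≤ n s := le_sup_left
      exact neg_le_iff_add_nonneg'.1 this
    have i3 : n s0 ≤ ∫ s in (0:ℝ)..s0, R |s0 - s| (B (n s)) := by
      refine sup_le ?_ i1
      rw [abs_of_nonneg hs0.1, d, neg_le_iff_add_nonneg', add_assoc]
      exact add_nonneg (hRp _ hs0.1 _ hf) i2
    have i4 : ‖n s0‖ ≤ ‖∫ s in (0:ℝ)..s0, R |s0 - s| (B (n s))‖ := by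
      apply norm_le_norm_of_abs_le_abs
      rw [abs_of_nonneg i1, abs_of_nonneg (le_sup_right : 0 ≤ n s0)]
      exact i3
    have i5 : ‖∫ s in (0:ℝ)..s0, R |s0 - s| (B (n s))‖ ≤ M * (‖B‖ * ‖n s0‖) * |s0 - 0| := by
      apply intervalIntegral.norm_integral_le_of_norm_le_const
      intro s hs
      rw [Set.uIoc_of_le hs0.1] at hs
      have a2 : ‖R |s0 - s|‖ ≤ M := hM _ (abs_nonneg _) (by
        rw [abs_of_nonneg (by linarith [hs.2])]; linarith [hs.1, hs0.2])
      refine ((R |s0 - s|).le_opNorm _).trans (mul_le_mul a2 ?_ (norm_nonneg _) hM0)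
      refine (B.le_opNorm _).trans (mul_le_mul_of_nonneg_left ?_ (norm_nonneg _))
      exact hmax ⟨hs.1.le, hs.2.trans hs0.2⟩
    have i6 : ‖n s0‖ ≤ 1 / 2 * ‖n s0‖ := by
      refine (i4.trans i5).trans ?_
      rw [sub_zero, abs_of_nonneg hs0.1]
      calc M * (‖B‖ * ‖n s0‖) * s0 ≤ M * (‖B‖ * ‖n s0‖) * a :=
            mul_le_mul_of_nonneg_left hs0.2 (by positivity)
        _ = M * ‖B‖ * a * ‖n s0‖ := by ring
        _ ≤ _ := mul_le_mul_of_nonneg_right ha2 (norm_nonneg _)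
    have i7 : ‖n t‖ ≤ 0 := by
      have : ‖n t‖ ≤ ‖n s0‖ := hmax ⟨ht, hta⟩
      linarith
    have i8 : n t = 0 := norm_le_zero_iff.1 i7
    have i9 : -(S |t| f) ≤ n t := le_sup_left
    rw [i8, abs_of_nonneg ht] at i9
    exact neg_nonpos.1 i9
  have all : ∀ k : ℕ, ∀ t, 0 ≤ t → t ≤ k * a → ∀ f, 0 ≤ f → 0 ≤ S t f := by
    intro k
    induction k with
    | zero =>
      intro t ht h f hf
      exact small t ht (by simp at h; linarith) f hf
    | succ k ih =>
      intro t ht h f hf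
      by_cases hta : t ≤ a
      · exact small t ht hta f hf
      · push Not at hta
        push_cast at h
        have e : S t = (S (t - a)).comp (S a) := by
          rw [← hS.1.2 _ _ (by linarith) ha0.le, sub_add_cancel]
        rw [e]
        exact ih _ (by linarith) (by linarith) _ (small a ha0.le le_rfl f hf)
  intro t ht f hf
  obtain ⟨k, hk⟩ := exists_nat_ge (t / a)
  exact all k t ht ((div_le_iff₀ ha0).1 hk) f hf

lemma scale_C0 {S : ℝ → E →L[ℝ] E} (hS : IsC0Semigroup S) (c : ℝ) :
    IsC0Semigroup (fun t => Real.exp (c * t) • S t) := by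
  refine ⟨⟨by simp [hS.1.1], fun s t hs ht => ?_⟩, fun f => ?_⟩
  · show Real.exp (c * (s + t)) • S (s + t) = (Real.exp (c * s) • S s).comp (Real.exp (c * t) • S t)
    rw [hS.1.2 s t hs ht, mul_add, Real.exp_add, ContinuousLinearMap.smul_comp,
      ContinuousLinearMap.comp_smul, smul_smul]
  · have h1 : ContinuousOn (fun t : ℝ => Real.exp (c * t)) (Set.Ici 0) := by fun_prop
    exact h1.smul (hS.2 f)

lemma scale_gen {S : ℝ → E →L[ℝ] E} (c : ℝ) {f k : E}
    (h : InGenerator (fun t => Real.exp (c * t) • S t) f k) : InGenerator S f (k - c • f) := by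
  have h1 : Tendsto (fun t : ℝ => Real.exp (-(c * t))) (𝓝[>] 0) (𝓝 1) := by
    have : Continuous (fun t : ℝ => Real.exp (-(c * t))) := by fun_prop
    have := this.tendsto 0
    simp only [mul_zero, neg_zero, Real.exp_zero] at this
    exact this.mono_left nhdsWithin_le_nhds
  have h2 : Tendsto (fun t : ℝ => t⁻¹ • (Real.exp (-(c * t)) - 1)) (𝓝[>] 0) (𝓝 (-c)) := by
    have hd : HasDerivAt (fun t : ℝ => Real.exp (-(c * t))) (-c) 0 := by
      have := (((hasDerivAt_id (0:ℝ)).const_mul c).neg).exp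
      simpa using this
    have := (hasDerivAt_iff_tendsto_slope_zero.1 hd).mono_left
      (nhdsWithin_mono _ (fun x (hx : x ∈ Set.Ioi (0:ℝ)) => ne_of_gt hx))
    simpa using this
  have h3 := (h1.smul h).add (h2.smul_const f)
  rw [one_smul, neg_smul, ← sub_eq_add_neg] at h3
  refine h3.congr fun t => ?_
  show Real.exp (-(c * t)) • t⁻¹ • (Real.exp (c * t) • S t f - f)
    + (t⁻¹ • (Real.exp (-(c * t)) - 1)) • f = t⁻¹ • (S t f - f)
  rw [smul_comm, smul_assoc, ← smul_add]
  congr 1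
  rw [smul_sub, smul_smul, ← Real.exp_add, neg_add_cancel, Real.exp_zero, one_smul, sub_smul,
    one_smul]
  abel

lemma pos_absorb {T S : ℝ → E →L[ℝ] E} (hT : IsC0Semigroup T) (hS : IsC0Semigroup S)
    (W : E →L[ℝ] E) (c : ℝ)
    (hSg : ∀ f k, InGenerator S f k → InGenerator T f (k + W f))
    (hTp : ∀ t, 0 ≤ t → ∀ f, 0 ≤ f → 0 ≤ T t f) (hW : ∀ f, 0 ≤ f → W f ≤ c • f) :
    ∀ t, 0 ≤ t → ∀ f, 0 ≤ f → 0 ≤ S t f := by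
  have := pos_pert hT (scale_C0 hS c) (c • ContinuousLinearMap.id ℝ E - W) (fun f k h => by
    have h1 := hSg _ _ (scale_gen c h)
    convert h1 using 1
    simp only [_root_.sub_apply, _root_.smul_apply,
      ContinuousLinearMap.id_apply]
    abel) hTp (fun f hf => by
      simp only [_root_.sub_apply, _root_.smul_apply,
        ContinuousLinearMap.id_apply, sub_nonneg]
      exact hW f hf)
  intro t ht f hf
  have h1 : 0 ≤ Real.exp (c * t) • S t f := this t ht f hf
  have h2 := smul_nonneg (Real.exp_pos (-(c * t))).le h1
  rwa [smul_smul, ← Real.exp_add, neg_add_cancel, Real.exp_zero, one_smul] at h2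

lemma compare {T S R : ℝ → E →L[ℝ] E} (hT : IsC0Semigroup T) (hS : IsC0Semigroup S)
    (hR : IsC0Semigroup R) (W U : E →L[ℝ] E) (c ε : ℝ) (hε : 0 < ε)
    (hSg : ∀ f k, InGenerator S f k → InGenerator T f (k + W f))
    (hRg : ∀ f k, InGenerator R f k → InGenerator T f (k + U f))
    (hRS : ∀ f k, InGenerator R f k → InGenerator S f (k - (W - U) f))
    (hTp : ∀ t, 0 ≤ t → ∀ f, 0 ≤ f → 0 ≤ T t f)
    (hW : ∀ f, 0 ≤ f → W f ≤ c • f) (hW0 : ∀ f, 0 ≤ f → 0 ≤ W f)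
    (hU : ∀ f, 0 ≤ f → U f ≤ c • f) (hUW : ∀ f, 0 ≤ f → U f ≤ W f)
    (hWU : ∀ f, 0 ≤ f → ε • W f ≤ U f) :
    ∀ t, 0 ≤ t → ∀ f, 0 ≤ f → 0 ≤ S t f ∧ S t f ≤ R t f ∧ R t f ≤ T t f ∧
      R t f ≤ (1 - ε) • T t f + ε • S t f := by
  have hSp := pos_absorb hT hS W c hSg hTp hW
  have hRp := pos_absorb hT hR U c hRg hTp hU
  have hSR : ∀ t, 0 ≤ t → ∀ f, 0 ≤ f → S t f ≤ R t f := by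
    intro t ht f hf
    rw [duhamel hS hR (W - U) hRS ht f]
    refine le_add_of_nonneg_right (int_nonneg ht fun s _ _ => hSp _ (abs_nonneg _) _ ?_)
    rw [_root_.sub_apply, sub_nonneg]
    exact hUW _ (hRp _ (abs_nonneg _) _ hf)
  intro t ht f hf
  have hcR := cont1 hR f
  have hcS := cont1 hS f
  have c1 : Continuous fun s : ℝ => T |t - s| (U (R |s| f)) :=
    (cont2 hT).comp ((continuous_const.sub continuous_id).prodMk (U.continuous.comp hcR))
  have c2 : Continuous fun s : ℝ => T |t - s| (W (S |s| f)) :=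
    (cont2 hT).comp ((continuous_const.sub continuous_id).prodMk (W.continuous.comp hcS))
  have c3 : Continuous fun s : ℝ => ε • T |t - s| (W (S |s| f)) := c2.const_smul ε
  have dR : R t f = T t f - ∫ s in (0:ℝ)..t, T |t - s| (U (R |s| f)) := by
    have := duhamel hT hR (-U) (fun f k h => by simpa using hRg f k h) ht f
    rw [this]
    simp [sub_eq_add_neg]
  have dS : S t f = T t f - ∫ s in (0:ℝ)..t, T |t - s| (W (S |s| f)) := by
    have := duhamel hT hS (-W) (fun f k h => by simpa using hSg f k h) ht f
    rw [this]
    simp [sub_eq_add_neg]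
  refine ⟨hSp t ht f hf, hSR t ht f hf, ?_, ?_⟩
  · rw [dR]
    refine sub_le_self _ (int_nonneg ht fun s _ _ => hTp _ (abs_nonneg _) _ ?_)
    have h1 := hRp _ (abs_nonneg s) _ hf
    exact (smul_nonneg hε.le (hW0 _ h1)).trans (hWU _ h1)
  · have i : 0 ≤ (∫ s in (0:ℝ)..t, T |t - s| (U (R |s| f)))
        - ε • ∫ s in (0:ℝ)..t, T |t - s| (W (S |s| f)) := by
      rw [← intervalIntegral.integral_smul, ← intervalIntegral.integral_sub
        (c1.intervalIntegrable _ _) (c3.intervalIntegrable _ _)]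
      refine int_nonneg ht fun s _ _ => ?_
      rw [← map_smul, ← map_sub]
      refine hTp _ (abs_nonneg _) _ (sub_nonneg.2 ?_)
      have h1 := hRp _ (abs_nonneg s) _ hf
      exact (smul_le_smul_of_nonneg_left (pos_mono hW0 (hSR _ (abs_nonneg s) _ hf)) hε.le).trans
        (hWU _ h1)
    rw [dR, dS]
    rw [← sub_nonneg]
    convert i using 1
    module

lemma limit_sg {R : ℕ → ℝ → E →L[ℝ] E} {F : ℝ → E →L[ℝ] E} (hR : ∀ n, IsSemigroup (R n))
    (h : ∀ t : ℝ, 0 ≤ t → ∀ f, Tendsto (fun n => R n t f) atTop (𝓝 (F t f)))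
    {s t : ℝ} (hs : 0 ≤ s) (ht : 0 ≤ t) (f : E) : F (s + t) f = F s (F t f) := by
  obtain ⟨C, hC⟩ := banach_steinhaus (g := fun n => R n s) (fun x => by
    obtain ⟨C, hC⟩ := (Metric.isBounded_range_of_tendsto _ (h s hs x)).exists_norm_le
    exact ⟨C, fun n => hC _ ⟨n, rfl⟩⟩)
  have h1 : Tendsto (fun n => R n s (R n t f - F t f)) atTop (𝓝 0) := by
    have h0 := tendsto_iff_norm_sub_tendsto_zero.1 (h t ht f)
    have h2 := h0.const_mul C
    rw [mul_zero] at h2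
    exact squeeze_zero_norm (fun n => (R n s).le_of_opNorm_le (hC n) _) h2
  have h2 := h1.add (h s hs (F t f))
  rw [zero_add] at h2
  refine tendsto_nhds_unique (h (s + t) (add_nonneg hs ht) f) (h2.congr fun n => ?_)
  rw [(hR n).2 s t hs ht, map_sub, sub_add_cancel]
  rfl

lemma final {T TV F : ℝ → E →L[ℝ] E} {P : E →L[ℝ] E} (hT : IsC0Semigroup T) {ε : ℝ}
    (hε : 0 < ε) (hε1 : ε ≤ 1)
    (hF : ∀ s t, 0 ≤ s → 0 ≤ t → ∀ f, F (s + t) f = F s (F t f))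
    (hc : ∀ t, 0 ≤ t → ∀ f, 0 ≤ f → 0 ≤ TV t f ∧ TV t f ≤ F t f ∧ F t f ≤ T t f ∧
      F t f ≤ (1 - ε) • T t f + ε • TV t f)
    (hP : ∀ f, Tendsto (fun t : ℝ => TV t f) (𝓝[>] (0 : ℝ)) (𝓝 (P f)))
    (hPP : ∀ f, P (P f) = P f) (hPp : ∀ f, 0 ≤ f → 0 ≤ P f) (f : E) :
    Tendsto (fun t : ℝ => F t f) (𝓝[>] (0 : ℝ)) (𝓝 (P f)) := by
  have hFp : ∀ t, 0 ≤ t → ∀ f, 0 ≤ f → 0 ≤ F t f := fun t ht f hf =>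
    (hc t ht f hf).1.trans (hc t ht f hf).2.1
  have hT0 : ∀ f, Tendsto (fun t : ℝ => T t f) (𝓝[>] (0 : ℝ)) (𝓝 f) := by
    intro f
    have := (hT.2 f 0 (Set.mem_Ici.2 le_rfl)).mono_left (nhdsWithin_mono _ Set.Ioi_subset_Ici_self)
    simpa [hT.1.1] using this
  have half : Tendsto (fun t : ℝ => t / 2) (𝓝[>] 0) (𝓝[>] 0) := by
    refine tendsto_nhdsWithin_iff.2 ⟨?_, ?_⟩
    · have : Continuous (fun y : ℝ => y / 2) := by fun_prop
      have := this.tendsto 0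
      rw [zero_div] at this
      exact this.mono_left nhdsWithin_le_nhds
    · filter_upwards [self_mem_nhdsWithin] with y hy
      exact Set.mem_Ioi.2 (half_pos (Set.mem_Ioi.1 hy))
  have ha0 : 0 ≤ 1 - ε := by linarith
  have key : ∀ k : ℕ, ∀ f, 0 ≤ f → ∃ r : ℝ → E, Tendsto r (𝓝[>] 0) (𝓝 0) ∧
      ∀ t, 0 < t → F t f ≤ (1 - ε) ^ k • f + (1 - (1 - ε) ^ k) • P f + r t := by
    intro k
    induction k with
    | zero =>
      intro f hf
      refine ⟨fun t => T t f - f, ?_, fun t ht => ?_⟩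
      · simpa using (hT0 f).sub_const f
      · simpa using (hc t ht.le f hf).2.2.1
    | succ k ih =>
      intro f hf
      obtain ⟨r, hr, hrf⟩ := ih f hf
      obtain ⟨q, hq, hqf⟩ := ih (P f) (hPp f hf)
      set r1 : ℝ → E := fun t => (1 - ε) • (T t f - f) + ε • (TV t f - P f) with hr1
      have hr1l : Tendsto r1 (𝓝[>] 0) (𝓝 0) := by
        simpa using (((hT0 f).sub_const f).const_smul (1 - ε)).add
          (((hP f).sub_const (P f)).const_smul ε)
      have hr1a : Tendsto (fun t => |r1 t|) (𝓝[>] 0) (𝓝 0) := by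
        rw [tendsto_zero_iff_norm_tendsto_zero] at hr1l ⊢
        simpa only [norm_abs_eq_norm] using hr1l
      refine ⟨fun t => (1 - ε) • r (t / 2) + ε • q (t / 2) + T |t / 2| |r1 (t / 2)|, ?_,
        fun t ht => ?_⟩
      · have h1 := ((hr.comp half).const_smul (1 - ε)).add ((hq.comp half).const_smul ε)
        have h2 := ((cont2 hT).tendsto (0, 0)).comp
          ((half.mono_right nhdsWithin_le_nhds).prodMk_nhds (hr1a.comp half))
        have h3 := h1.add h2
        simpa [Function.comp_def] using h3
      · have ht2 : 0 < t / 2 := half_pos ht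
        have e : F t f = F (t / 2) (F (t / 2) f) := by
          rw [← hF _ _ ht2.le ht2.le, add_halves]
        have h1 : F (t / 2) f ≤ (1 - ε) • f + ε • P f + |r1 (t / 2)| := by
          refine (hc _ ht2.le f hf).2.2.2.trans ?_
          refine le_trans (le_of_eq ?_) (add_le_add_right (le_abs_self (r1 (t / 2))) _)
          simp only [hr1]
          module
        have h2 := pos_mono (hFp _ ht2.le) h1
        rw [map_add, map_add, map_smul, map_smul] at h2
        have h3 := smul_le_smul_of_nonneg_left (hrf _ ht2) ha0
        have h4 := smul_le_smul_of_nonneg_left (hqf _ ht2) hε.le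
        have h5 := (hc _ ht2.le _ (abs_nonneg (r1 (t / 2)))).2.2.1
        rw [hPP] at h4
        rw [e]
        refine (h2.trans (add_le_add (add_le_add h3 h4) h5)).trans (le_of_eq ?_)
        simp only [abs_of_pos ht2]
        module
  have pos : ∀ f, 0 ≤ f → Tendsto (fun t : ℝ => F t f) (𝓝[>] (0 : ℝ)) (𝓝 (P f)) := by
    intro f hf
    have hd : Tendsto (fun t : ℝ => F t f - TV t f) (𝓝[>] (0 : ℝ)) (𝓝 0) := by
      rw [tendsto_zero_iff_norm_tendsto_zero, Metric.tendsto_nhds]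
      intro δ hδ
      have hpow : Tendsto (fun k : ℕ => (1 - ε) ^ k * ‖f - P f‖) atTop (𝓝 0) := by
        simpa using (tendsto_pow_atTop_nhds_zero_of_lt_one ha0 (by linarith)).mul_const ‖f - P f‖
      obtain ⟨k, hk⟩ := (hpow.eventually (gt_mem_nhds (half_pos hδ))).exists
      obtain ⟨r, hr, hrf⟩ := key k f hf
      have h1 : Tendsto (fun t => ‖(P f - TV t f) + r t‖) (𝓝[>] 0) (𝓝 0) := by
        simpa using (((hP f).const_sub (P f)).add hr).norm
      filter_upwards [h1.eventually (gt_mem_nhds (half_pos hδ)), self_mem_nhdsWithin] with t h2 ht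
      have ht : 0 < t := ht
      have h3 : 0 ≤ F t f - TV t f := sub_nonneg.2 (hc t ht.le f hf).2.1
      have h4 : F t f - TV t f ≤ (1 - ε) ^ k • (f - P f) + ((P f - TV t f) + r t) := by
        refine (sub_le_sub_right (hrf t ht) _).trans (le_of_eq ?_)
        module
      have h5 : ‖F t f - TV t f‖ ≤ ‖(1 - ε) ^ k • (f - P f) + ((P f - TV t f) + r t)‖ := by
        apply norm_le_norm_of_abs_le_abs
        rw [abs_of_nonneg h3, abs_of_nonneg (h3.trans h4)]
        exact h4
      have h6 := h5.trans (norm_add_le _ _)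
      rw [norm_smul, Real.norm_of_nonneg (pow_nonneg ha0 k)] at h6
      rw [dist_zero_right, norm_norm]
      linarith
    simpa using hd.add (hP f)
  have h := (pos (f⁺) (posPart_nonneg f)).sub (pos (f⁻) (negPart_nonneg f))
  rw [← map_sub, posPart_sub_negPart] at h
  refine h.congr fun t => ?_
  rw [← map_sub, posPart_sub_negPart]

end lattice_part

section Lp_part

variable {Ω : Type*} [MeasurableSpace Ω] {μ : Measure Ω} {p : ℝ≥0∞} [Fact (1 ≤ p)]

instance instOM : IsOrderedModule ℝ (Lp ℝ p μ) := by
  refine IsOrderedModule.of_smul_nonneg fun a ha f hf => ?_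
  rw [← Lp.coeFn_nonneg] at hf ⊢
  filter_upwards [hf, Lp.coeFn_smul a f] with ω h1 h2
  rw [h2]
  exact mul_nonneg ha h1

lemma aesm (hp : p ≠ ∞) {W : Ω → ℝ} (hW : LocallyMeasurable μ W) (f : Lp ℝ p μ) :
    AEStronglyMeasurable (fun ω => W ω * f ω) μ := by
  have hp0 : p ≠ 0 := (lt_of_lt_of_le one_pos (Fact.out : 1 ≤ p)).ne'
  obtain ⟨t, ht, hft, hσ⟩ := (Lp.finStronglyMeasurable f hp0 hp).exists_set_sigmaFinite
  have h1 : AEMeasurable W (μ.restrict t) := by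
    have hcov : ⋃ n, (spanningSets (μ.restrict t) n) = Set.univ := iUnion_spanningSets _
    rw [← Measure.restrict_univ (μ := μ.restrict t), ← hcov, aemeasurable_iUnion_iff]
    intro n
    have hm : MeasurableSet (spanningSets (μ.restrict t) n) := measurableSet_spanningSets _ n
    rw [Measure.restrict_restrict hm]
    have hfin : μ (spanningSets (μ.restrict t) n ∩ t) < ∞ := by
      rw [← Measure.restrict_apply hm]
      exact measure_spanningSets_lt_top _ n
    obtain ⟨g, hg, hgW⟩ := hW _ (hm.inter ht) hfin
    exact ⟨g, hg, hgW⟩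
  have h2 : AEStronglyMeasurable (fun ω => W ω * f ω) (μ.restrict t) :=
    h1.aestronglyMeasurable.mul (Lp.aestronglyMeasurable f).restrict
  have h3 : AEStronglyMeasurable (t.indicator (fun ω => W ω * f ω)) μ :=
    (aestronglyMeasurable_indicator_iff ht).2 h2
  have h4 : t.indicator (fun ω => W ω * f ω) = fun ω => W ω * f ω := by
    funext ω
    by_cases h : ω ∈ t
    · rw [Set.indicator_of_mem h]
    · rw [Set.indicator_of_notMem h, hft ω h, mul_zero]
  rwa [h4] at h3

lemma mulOp (hp : p ≠ ∞) {W : Ω → ℝ} (hW : LocallyMeasurable μ W) {c : ℝ}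
    (h0 : ∀ ω, 0 ≤ W ω) (hc : ∀ ω, W ω ≤ c) :
    ∃ B : Lp ℝ p μ →L[ℝ] Lp ℝ p μ, ∀ f : Lp ℝ p μ, ⇑(B f) =ᵐ[μ] fun ω => W ω * f ω := by
  have hb : ∀ (f : Lp ℝ p μ) ω, ‖W ω * f ω‖ ≤ c * ‖f ω‖ := fun f ω => by
    rw [norm_mul, Real.norm_of_nonneg (h0 ω)]
    exact mul_le_mul_of_nonneg_right (hc ω) (norm_nonneg _)
  have hmem : ∀ f : Lp ℝ p μ, MemLp (fun ω => W ω * f ω) p μ := fun f =>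
    (Lp.memLp f).of_le_mul (aesm hp hW f) (Eventually.of_forall (hb f))
  let L : Lp ℝ p μ →ₗ[ℝ] Lp ℝ p μ :=
    { toFun := fun f => (hmem f).toLp _
      map_add' := fun f g => by
        apply Lp.ext
        filter_upwards [(hmem (f + g)).coeFn_toLp, Lp.coeFn_add f g, (hmem f).coeFn_toLp,
          (hmem g).coeFn_toLp, Lp.coeFn_add ((hmem f).toLp _) ((hmem g).toLp _)]
          with ω h1 h2 h3 h4 h5
        rw [h1, h5, Pi.add_apply, h3, h4, h2, Pi.add_apply, mul_add]
      map_smul' := fun a f => by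
        apply Lp.ext
        filter_upwards [(hmem (a • f)).coeFn_toLp, Lp.coeFn_smul a f, (hmem f).coeFn_toLp,
          Lp.coeFn_smul a ((hmem f).toLp _)] with ω h1 h2 h3 h4
        simp only [RingHom.id_apply]
        rw [h1, h4, Pi.smul_apply, h3, h2, Pi.smul_apply, smul_eq_mul, smul_eq_mul]
        ring }
  refine ⟨L.mkContinuous c fun f => ?_, fun f => (hmem f).coeFn_toLp⟩
  apply Lp.norm_le_mul_norm_of_ae_le_mul
  filter_upwards [(hmem f).coeFn_toLp] with ω h1
  show ‖((hmem f).toLp _ : Lp ℝ p μ) ω‖ ≤ _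
  rw [h1]
  exact hb f ω

lemma gen_down {T S : ℝ → Lp ℝ p μ →L[ℝ] Lp ℝ p μ} {W : Ω → ℝ} (h : IsPerturbedSG μ p T S W)
    {B : Lp ℝ p μ →L[ℝ] Lp ℝ p μ} (hB : ∀ f : Lp ℝ p μ, ⇑(B f) =ᵐ[μ] fun ω => W ω * f ω)
    {f k : Lp ℝ p μ} (hf : InGenerator S f k) : InGenerator T f (k + B f) := by
  obtain ⟨g, hg, hk⟩ := (h.2 f k).1 hf
  have : k + B f = g := by
    apply Lp.ext
    filter_upwards [Lp.coeFn_add k (B f), hB f, hk] with ω h1 h2 h3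
    rw [h1, Pi.add_apply, h2, h3]
    ring
  rwa [this]

lemma gen_up {T S : ℝ → Lp ℝ p μ →L[ℝ] Lp ℝ p μ} {W : Ω → ℝ} (h : IsPerturbedSG μ p T S W)
    {B : Lp ℝ p μ →L[ℝ] Lp ℝ p μ} (hB : ∀ f : Lp ℝ p μ, ⇑(B f) =ᵐ[μ] fun ω => W ω * f ω)
    {f k : Lp ℝ p μ} (hf : InGenerator T f k) : InGenerator S f (k - B f) := by
  refine (h.2 f _).2 ⟨k, hf, ?_⟩
  filter_upwards [Lp.coeFn_sub k (B f), hB f] with ω h1 h2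
  rw [h1, Pi.sub_apply, h2]

lemma op_le {A B : Lp ℝ p μ →L[ℝ] Lp ℝ p μ} {U W : Ω → ℝ}
    (hA : ∀ f : Lp ℝ p μ, ⇑(A f) =ᵐ[μ] fun ω => U ω * f ω)
    (hB : ∀ f : Lp ℝ p μ, ⇑(B f) =ᵐ[μ] fun ω => W ω * f ω) (h : ∀ ω, U ω ≤ W ω)
    (f : Lp ℝ p μ) (hf : 0 ≤ f) : A f ≤ B f := by
  rw [← Lp.coeFn_nonneg] at hf
  rw [← Lp.coeFn_le]
  filter_upwards [hA f, hB f, hf] with ω h1 h2 h3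
  rw [h1, h2]
  exact mul_le_mul_of_nonneg_right (h ω) h3

lemma smul_op {A : Lp ℝ p μ →L[ℝ] Lp ℝ p μ} {U : Ω → ℝ}
    (hA : ∀ f : Lp ℝ p μ, ⇑(A f) =ᵐ[μ] fun ω => U ω * f ω) (ε : ℝ) (f : Lp ℝ p μ) :
    ⇑((ε • A) f) =ᵐ[μ] fun ω => (ε * U ω) * f ω := by
  filter_upwards [hA f, Lp.coeFn_smul ε (A f)] with ω h1 h2
  show (ε • A f : Lp ℝ p μ) ω = _
  rw [h2, Pi.smul_apply, h1, smul_eq_mul, mul_assoc]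

lemma lm_comp {V : Ω → ℝ≥0∞} (hV : LocallyMeasurable μ V) {φ : ℝ≥0∞ → ℝ} (hφ : Measurable φ) :
    LocallyMeasurable μ (fun ω => φ (V ω)) := by
  intro B hB hfin
  obtain ⟨g, hg, h⟩ := hV B hB hfin
  exact ⟨fun ω => φ (g ω), hφ.comp hg, h.mono fun ω hω => congrArg φ hω⟩

lemma trunc_nonneg (V : Ω → ℝ≥0∞) (n : ℕ) (ω : Ω) : 0 ≤ trunc V n ω := ENNReal.toReal_nonneg

lemma trunc_le (V : Ω → ℝ≥0∞) (n : ℕ) (ω : Ω) : trunc V n ω ≤ n := by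
  have := ENNReal.toReal_mono (ENNReal.natCast_ne_top n) (min_le_right (V ω) (n : ℝ≥0∞))
  simpa [trunc] using this

lemma trunc_smul_le (V : Ω → ℝ≥0∞) (n : ℕ) (ω : Ω) {ε : ℝ} (hε1 : ε ≤ 1) :
    trunc (smulRate ε V) n ω ≤ trunc V n ω := by
  apply ENNReal.toReal_mono
  · exact ne_top_of_le_ne_top (ENNReal.natCast_ne_top n) (min_le_right _ _)
  · refine min_le_min_right _ ?_
    calc ENNReal.ofReal ε * V ω ≤ 1 * V ω :=
          mul_le_mul_left (ENNReal.ofReal_le_one.2 hε1) _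
      _ = V ω := one_mul _

lemma smul_trunc_le (V : Ω → ℝ≥0∞) (n : ℕ) (ω : Ω) {ε : ℝ} (hε : 0 < ε) (hε1 : ε ≤ 1) :
    ε * trunc V n ω ≤ trunc (smulRate ε V) n ω := by
  have e : ε * trunc V n ω = (ENNReal.ofReal ε * min (V ω) (n : ℝ≥0∞)).toReal := by
    rw [ENNReal.toReal_mul, ENNReal.toReal_ofReal hε.le]
    rfl
  rw [e]
  apply ENNReal.toReal_mono
  · exact ne_top_of_le_ne_top (ENNReal.natCast_ne_top n) (min_le_right _ _)
  · refine le_min (mul_le_mul_right (min_le_left _ _) _) ?_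
    calc ENNReal.ofReal ε * min (V ω) (n : ℝ≥0∞) ≤ 1 * (n : ℝ≥0∞) :=
          mul_le_mul' (ENNReal.ofReal_le_one.2 hε1) (min_le_right _ _)
      _ = n := one_mul _

lemma main (hp : p ≠ ∞)
    (T : ℝ → Lp ℝ p μ →L[ℝ] Lp ℝ p μ)
    (hT : IsC0Semigroup T) (hTpos : IsPositiveSG T)
    (V : Ω → ℝ≥0∞) (hVmeas : LocallyMeasurable μ V)
    (TV : ℝ → Lp ℝ p μ →L[ℝ] Lp ℝ p μ)
    (hTV : IsAbsorptionSG μ p T V TV)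
    (P : Lp ℝ p μ →L[ℝ] Lp ℝ p μ)
    (hP : ∀ f : Lp ℝ p μ, Tendsto (fun t : ℝ => TV t f) (𝓝[>] (0 : ℝ)) (𝓝 (P f)))
    (hPband : IsBandProjection P) {ε : ℝ} (hε : 0 < ε) (hε1 : ε ≤ 1)
    (F : ℝ → Lp ℝ p μ →L[ℝ] Lp ℝ p μ)
    (hF : IsAbsorptionSG μ p T (smulRate ε V) F) (f : Lp ℝ p μ) :
    Tendsto (fun t : ℝ => F t f) (𝓝[>] (0 : ℝ)) (𝓝 (P f)) := by
  obtain ⟨S, hS, hSl⟩ := hTV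
  obtain ⟨R, hR, hRl⟩ := hF
  have cmp : ∀ n : ℕ, ∀ t, 0 ≤ t → ∀ f, 0 ≤ f → 0 ≤ S n t f ∧ S n t f ≤ R n t f ∧
      R n t f ≤ T t f ∧ R n t f ≤ (1 - ε) • T t f + ε • S n t f := by
    intro n
    have hWm : LocallyMeasurable μ (trunc V n) :=
      lm_comp hVmeas (φ := fun v => (min v (n : ℝ≥0∞)).toReal)
        (measurable_id.min measurable_const).ennreal_toReal
    have hUm : LocallyMeasurable μ (trunc (smulRate ε V) n) :=
      lm_comp hVmeas (φ := fun v => (min (ENNReal.ofReal ε * v) (n : ℝ≥0∞)).toReal)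
        ((measurable_const.mul measurable_id).min measurable_const).ennreal_toReal
    obtain ⟨W, hW⟩ := mulOp hp hWm (trunc_nonneg V n) (trunc_le V n)
    obtain ⟨U, hU⟩ := mulOp hp hUm (trunc_nonneg _ n) (trunc_le _ n)
    have hid : ∀ f : Lp ℝ p μ, ⇑(((n : ℝ) • ContinuousLinearMap.id ℝ (Lp ℝ p μ)) f)
        =ᵐ[μ] fun ω => (n : ℝ) * f ω := fun f => Lp.coeFn_smul (n : ℝ) f
    have hz : ∀ f : Lp ℝ p μ, ⇑((0 : Lp ℝ p μ →L[ℝ] Lp ℝ p μ) f)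
        =ᵐ[μ] fun ω => (0 : ℝ) * f ω := fun f => by
      filter_upwards [Lp.coeFn_zero ℝ p μ] with ω h1
      rw [zero_mul]
      exact h1
    refine compare hT (hS n).1 (hR n).1 W U n ε hε
      (fun f k h => gen_down (hS n) hW h) (fun f k h => gen_down (hR n) hU h) (fun f k h => ?_)
      hTpos (fun f hf => op_le hW hid (trunc_le V n) f hf)
      (fun f hf => op_le hz hW (trunc_nonneg V n) f hf)
      (fun f hf => op_le hU hid (trunc_le _ n) f hf)
      (fun f hf => op_le hU hW (fun ω => trunc_smul_le V n ω hε1) f hf)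
      (fun f hf => op_le (smul_op hW ε) hU (fun ω => smul_trunc_le V n ω hε hε1) f hf)
    have := gen_up (hS n) hW (gen_down (hR n) hU h)
    convert this using 1
    rw [_root_.sub_apply]
    abel
  refine final hT hε hε1
    (fun s t hs ht f => limit_sg (fun n => (hR n).1.1) hRl hs ht f) (fun t ht f hf => ?_) hP
    (fun f => DFunLike.congr_fun hPband.1 f) (fun f hf => (hPband.2 f hf).1) f
  have lS := hSl t ht f
  have lR := hRl t ht f
  refine ⟨ge_of_tendsto' lS fun n => (cmp n t ht f hf).1,
    le_of_tendsto_of_tendsto' lS lR fun n => (cmp n t ht f hf).2.1,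
    le_of_tendsto' lR fun n => (cmp n t ht f hf).2.2.1,
    le_of_tendsto_of_tendsto' lR ((lS.const_smul ε).const_add _)
      fun n => (cmp n t ht f hf).2.2.2⟩

end Lp_part

end AbsProof

/-- For locally measurable `V : Ω → [0,∞]` and every `ε ∈ (0,1]`, the strong
limit `s-lim_{t→0+} T_{εV}(t)` exists and equals the band projection
`P = s-lim_{t→0+} T_V(t)`. -/
theorem statement15
    {Ω : Type*} [MeasurableSpace Ω] (μ : Measure Ω) (p : ℝ≥0∞) [Fact (1 ≤ p)] (hp : p ≠ ∞)
    (T : ℝ → Lp ℝ p μ →L[ℝ] Lp ℝ p μ)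
    (hT : IsC0Semigroup T) (hTpos : IsPositiveSG T)
    (V : Ω → ℝ≥0∞) (hVmeas : LocallyMeasurable μ V)
    -- the one-parameter semigroup `T_V = s-lim_{n→∞} e^{t(A − V∧n)}`
    (TV : ℝ → Lp ℝ p μ →L[ℝ] Lp ℝ p μ)
    (hTV : IsAbsorptionSG μ p T V TV)
    -- the band projection `P = s-lim_{t→0+} T_V(t)`
    (P : Lp ℝ p μ →L[ℝ] Lp ℝ p μ)
    (hP : ∀ f : Lp ℝ p μ, Tendsto (fun t : ℝ => TV t f) (𝓝[>] (0 : ℝ)) (𝓝 (P f)))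
    (hPband : IsBandProjection P)
    -- the absorption semigroups `T_{εV}` for `ε ∈ (0,1]`
    (Sε : ℝ → ℝ → Lp ℝ p μ →L[ℝ] Lp ℝ p μ)
    (hSε : ∀ ε : ℝ, 0 < ε → ε ≤ 1 → IsAbsorptionSG μ p T (smulRate ε V) (Sε ε)) :
    ∀ ε : ℝ, 0 < ε → ε ≤ 1 → ∀ f : Lp ℝ p μ,
      Tendsto (fun t : ℝ => Sε ε t f) (𝓝[>] (0 : ℝ)) (𝓝 (P f)) := by
  intro ε hε hε1 f
  exact AbsProof.main hp T hT hTpos V hVmeas TV hTV P hP hPband hε hε1 (Sε ε) (hSε ε hε hε1) f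
end
end
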